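/- arXiv:2506.04187 — 5 statements merged into one kernel-verified Lean document; each statement's English description precedes it below -/
import Mathlib

section
/- Let γ=(γ_q)_{q≥1} be a sequence of real numbers contained in a finite set {σ_1, σ_2, …, σ_ℓ} ⊂ ℝ, and let ψ:ℕ→ℝ≥0 be decreasing with ∑_{q=1}^∞ ψ(q) = ∞. Then there exists σ ∈ {σ_1, …, σ_ℓ} such that meas(W(𝟙_{{q : γ_q = σ}}·ψ, γ)) = 1, where 𝟙_{{q : γ_q = σ}}·ψ equals ψ(q) when γ_q = σ and 0 otherwise. In particular meas(W(ψ,γ)) = 1. -/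
open MeasureTheory

/-- Distance from a real number to the nearest integer. -/
noncomputable def distNearestInt (x : ℝ) : ℝ := |x - round x|

/-- The set of `α ∈ [0,1]` with `‖qα - γ_q‖ < ψ q` for infinitely many `q ≥ 1`. -/
def WSet (ψ : ℕ → ℝ) (γ : ℕ → ℝ) : Set ℝ :=
  {α | α ∈ Set.Icc (0:ℝ) 1 ∧
    {q : ℕ | 1 ≤ q ∧ distNearestInt (q * α - γ q) < ψ q}.Infinite}

/-!
Fix a scale `Q = 2 ^ k` and a set `S ⊆ [Q, 2 * Q)` of at least `Q / ℓ` denominators. In an interval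
of length `L` there are about `#S * Q * L` shifted fractions `(a + σ) / q` with `q ∈ S`. If two of
them lie in the same cell of length `1 / (16 * Q ^ 2)` and have close denominators, then the one
with the smaller denominator lies very close to a fraction with small denominator, and a harmonic
sum shows that few do. The others meet each cell a bounded number of times, so they occupy
`≫ Q ^ 2 * L` cells. The shifted fractions thus form a regular system along the scales at which `S`
is dense; the Cauchy–Schwarz inequality and the Lebesgue density theorem turn divergence along these
scales into a full-measure statement.

A colouring of the integers with `ℓ` colours has, at each dyadic scale, a colour of density at least
`1 / ℓ`. By Cauchy condensation the sum over all scales diverges, so it diverges over the scales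
assigned to one of the colours.
-/

section

open Set Filter Metric
open scoped Topology ENNReal Finset

/-! ### Measure, series and counting -/

lemma sq_sum_measureReal_le {α ι : Type*} [MeasurableSpace α] {μ : Measure α} {s : Finset ι}
    {A : ι → Set α} (hA : ∀ i, MeasurableSet (A i)) (hμ : ∀ i, μ (A i) ≠ ∞) :
    (∑ i ∈ s, μ.real (A i)) ^ 2 ≤
      μ.real (⋃ i ∈ s, A i) * ∑ i ∈ s, ∑ j ∈ s, μ.real (A i ∩ A j) := by
  have hE : MeasurableSet (⋃ i ∈ s, A i) := s.measurableSet_biUnion fun i _ => hA i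
  have hμE : μ (⋃ i ∈ s, A i) ≠ ∞ :=
    ((measure_biUnion_finset_le s A).trans_lt (ENNReal.sum_lt_top.2 fun i _ => (hμ i).lt_top)).ne
  have h := real_inner_mul_inner_self_le (indicatorConstLp 2 hE hμE (1 : ℝ))
    (∑ i ∈ s, indicatorConstLp 2 (hA i) (hμ i) (1 : ℝ))
  simp only [inner_sum, sum_inner,
    L2.real_inner_indicatorConstLp_one_indicatorConstLp_one, inter_self] at h
  have hinter : ∀ i ∈ s, μ.real ((⋃ j ∈ s, A j) ∩ A i) = μ.real (A i) := fun i hi => by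
    rw [inter_eq_self_of_subset_right (subset_iUnion₂ (s := fun j _ => A j) i hi)]
  rw [Finset.sum_congr rfl hinter, ← sq] at h
  rwa [Finset.sum_comm]

theorem ae_mem_of_frequently_le_measure_inter_div {α : Type*} [MetricSpace α]
    [SecondCountableTopology α] [HasBesicovitchCovering α] [MeasurableSpace α]
    [BorelSpace α] {μ : Measure α} [IsLocallyFiniteMeasure μ] {s : Set α}
    (hs : MeasurableSet s) {c : ℝ≥0∞} (hc : c ≠ 0)
    (h : ∀ x, ∃ᶠ r in 𝓝[>] 0, c ≤ μ (s ∩ closedBall x r) / μ (closedBall x r)) :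
    ∀ᵐ x ∂μ, x ∈ s := by
  filter_upwards [Besicovitch.ae_tendsto_measure_inter_div_of_measurableSet μ hs] with x hx
  by_contra hxs
  rw [indicator_of_notMem hxs] at hx
  obtain ⟨r, hle, hlt⟩ :=
    ((h x).and_eventually (hx.eventually_lt_const hc.bot_lt)).exists
  exact hlt.not_ge hle

lemma exists_finset_one_le_sum_of_not_summable_indicator {w : ℕ → ℝ} (hw0 : ∀ k, 0 ≤ w k)
    {κ : Set ℕ} (hw : ¬Summable (κ.indicator w)) {p : ℕ → Prop} (hp : ∀ᶠ k in atTop, p k) :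
    ∃ F : Finset ℕ, (∀ k ∈ F, p k ∧ k ∈ κ) ∧ 1 ≤ ∑ k ∈ F, w k := by
  classical
  obtain ⟨K, hK⟩ := eventually_atTop.1 hp
  rw [← summable_nat_add_iff K, not_summable_iff_tendsto_nat_atTop_of_nonneg
    fun k => indicator_nonneg (fun k _ => hw0 k) (k + K)] at hw
  obtain ⟨n, hn⟩ := (hw.eventually_ge_atTop 1).exists
  refine ⟨{k ∈ (Finset.range n).map (addRightEmbedding K) | k ∈ κ}, ?_, ?_⟩
  · simp only [Finset.mem_filter, Finset.mem_map, addRightEmbedding_apply]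
    rintro _ ⟨⟨k, -, rfl⟩, hk⟩
    exact ⟨hK _ (Nat.le_add_left K k), hk⟩
  · simpa [Finset.sum_filter, indicator_apply] using hn

lemma exists_not_summable_indicator_fiber {ι : Type*} [Finite ι] (c : ℕ → ι) {w : ℕ → ℝ}
    (hw : ¬Summable w) : ∃ i, ¬Summable ((c ⁻¹' {i}).indicator w) := by
  classical
  have := Fintype.ofFinite ι
  contrapose! hw
  have hsum : w = fun k => ∑ i, (c ⁻¹' {i}).indicator w k := by
    ext k
    simp [indicator_apply]
  exact hsum ▸ summable_sum fun i _ => hw i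

lemma summable_of_summable_min_one {f : ℕ → ℝ} (hf : Summable fun k => min (f k) 1) :
    Summable f := by
  refine hf.congr_cofinite ?_
  filter_upwards [hf.tendsto_cofinite_zero.eventually_lt_const one_pos] with k hk
  exact min_eq_left ((min_lt_iff.1 hk).resolve_right (lt_irrefl 1)).le

lemma sum_sum_le_two_mul_of_symm {ι : Type*} [LinearOrder ι] {s : Finset ι} {f : ι → ι → ℝ}
    (hf0 : ∀ i j, 0 ≤ f i j) (hf : ∀ i j, f i j = f j i) :
    ∑ i ∈ s, ∑ j ∈ s, f i j ≤ 2 * ∑ i ∈ s, ∑ j ∈ s with j ≤ i, f i j := by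
  have hsplit : ∀ i j, f i j ≤ (if j ≤ i then f i j else 0) + if i ≤ j then f j i else 0 := by
    intro i j
    rcases le_total i j with h | h
    · rw [if_pos h, ← hf i j]
      exact le_add_of_nonneg_left (by split_ifs <;> simp [hf0])
    · rw [if_pos h]
      exact le_add_of_nonneg_right (by split_ifs <;> simp [hf0])
  refine (Finset.sum_le_sum fun i _ => Finset.sum_le_sum fun j _ => hsplit i j).trans_eq ?_
  simp only [Finset.sum_add_distrib, Finset.sum_filter, two_mul]
  rw [add_right_inj, Finset.sum_comm]

lemma card_Icc_floor_le {x y : ℝ} (hxy : x ≤ y) :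
    (#(Finset.Icc ⌊x⌋ ⌊y⌋) : ℝ) ≤ y - x + 2 := by
  have hcard := Int.card_Icc_of_le ⌊x⌋ ⌊y⌋ (by linarith [Int.floor_mono hxy])
  have hcard' : (#(Finset.Icc ⌊x⌋ ⌊y⌋) : ℝ) = ⌊y⌋ + 1 - ⌊x⌋ := by exact_mod_cast hcard
  linarith [Int.floor_le y, Int.lt_floor_add_one x]

lemma sum_le_two_mul_of_two_mul_le {N : ℕ → ℝ} (hN0 : ∀ k, 0 ≤ N k)
    (hN : ∀ k, 2 * N k ≤ N (k + 1)) (F : Finset ℕ) (k : ℕ) :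
    ∑ j ∈ F with j ≤ k, N j ≤ 2 * N k := by
  have hrange : ∑ j ∈ Finset.range (k + 1), N j ≤ 2 * N k := by
    induction k with
    | zero => simpa using by linarith [hN0 0]
    | succ k ih =>
      rw [Finset.sum_range_succ]
      linarith [hN k]
  refine (Finset.sum_le_sum_of_subset_of_nonneg (fun j hj => ?_) fun j _ _ => hN0 j).trans hrange
  exact Finset.mem_range_succ_iff.2 (Finset.mem_filter.1 hj).2

lemma card_le_div_add_one_of_gap {α : Type*} {s : Finset α} {f : α → ℕ} {m n d : ℕ} (hd : 0 < d)
    (hf : ∀ x ∈ s, f x ∈ Finset.Ico m (m + n))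
    (hgap : ∀ x ∈ s, ∀ y ∈ s, x ≠ y → f x ≤ f y → f x + d ≤ f y) : #s ≤ n / d + 1 := by
  have hmaps : ∀ x ∈ s, (f x - m) / d ∈ Finset.range (n / d + 1) := fun x hx => by
    have := Finset.mem_Ico.1 (hf x hx)
    exact Finset.mem_range_succ_iff.2 (Nat.div_le_div_right (by lia))
  have hlt : ∀ x ∈ s, ∀ y ∈ s, x ≠ y → f x ≤ f y → (f x - m) / d < (f y - m) / d :=
    fun x hx y hy hxy hle => by
      have := Finset.mem_Ico.1 (hf x hx)
      calc (f x - m) / d < (f x - m + d) / d := by simp [Nat.add_div_right _ hd]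
        _ ≤ (f y - m) / d := Nat.div_le_div_right (by have := hgap x hx y hy hxy hle; lia)
  simpa using Finset.card_le_card_of_injOn _ hmaps fun x hx y hy hxy => by
    by_contra hne
    rcases le_total (f x) (f y) with hle | hle
    · exact (hlt x hx y hy hne hle).ne hxy
    · exact (hlt y hy x hx (Ne.symm hne) hle).ne' hxy

lemma eventually_add_mul_log_le (a b : ℝ) {ε : ℝ} (hε : 0 < ε) :
    ∀ᶠ x : ℝ in atTop, a + b * Real.log x ≤ ε * x := by
  have hlittle : (fun x => a + b * Real.log x) =o[atTop] (id : ℝ → ℝ) :=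
    (Asymptotics.isLittleO_const_id_atTop a).add (Real.isLittleO_log_id_atTop.const_mul_left b)
  filter_upwards [hlittle.bound hε, eventually_ge_atTop 0] with x hx hx0
  exact (le_abs_self _).trans (by simpa [abs_of_nonneg hx0] using hx)

/-! ### Regular systems -/

/-- The elements of `X` lie in distinct cells `[m / N, (m + 1) / N)`, `m ∈ ℤ`. This replaces the
usual condition that distinct elements of `X` be at least `1 / N` apart. -/
def DistinctCells (N : ℝ) (X : Set ℝ) : Prop :=
  X.InjOn fun x => ⌊N * x⌋

namespace DistinctCells

variable {N : ℝ} {X : Finset ℝ}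

lemma card_le (hX : DistinctCells N X) (hN : 0 ≤ N) {a b : ℝ} (hab : a ≤ b)
    (hXab : ∀ x ∈ X, x ∈ Icc a b) : (#X : ℝ) ≤ N * (b - a) + 2 := by
  have hmaps : ∀ x ∈ X, ⌊N * x⌋ ∈ Finset.Icc ⌊N * a⌋ ⌊N * b⌋ := fun x hx =>
    Finset.mem_Icc.2
      ⟨Int.floor_mono (mul_le_mul_of_nonneg_left (hXab x hx).1 hN),
        Int.floor_mono (mul_le_mul_of_nonneg_left (hXab x hx).2 hN)⟩
  calc (#X : ℝ) ≤ #(Finset.Icc ⌊N * a⌋ ⌊N * b⌋) :=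
        mod_cast Finset.card_le_card_of_injOn _ hmaps hX
    _ ≤ N * b - N * a + 2 := card_Icc_floor_le (mul_le_mul_of_nonneg_left hab hN)
    _ = N * (b - a) + 2 := by ring

lemma sum_volume_ball_inter_ball_le (hX : DistinctCells N X) (hN : 0 ≤ N) {ρ ρ' : ℝ} (hρ : 0 ≤ ρ)
    (hρ' : 0 ≤ ρ') (y : ℝ) :
    ∑ x ∈ X, volume.real (ball y ρ ∩ ball x ρ') ≤ (2 * N * (ρ + ρ') + 2) * (2 * ρ') := by
  classical
  set Y : Finset ℝ := {x ∈ X | x ∈ closedBall y (ρ + ρ')}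
  have hcard : (#Y : ℝ) ≤ N * (y + (ρ + ρ') - (y - (ρ + ρ'))) + 2 :=
    DistinctCells.card_le (hX.mono <| Finset.coe_subset.2 <| Finset.filter_subset _ _) hN
      (by linarith) fun x hx => Real.closedBall_eq_Icc ▸ (Finset.mem_filter.1 hx).2
  have hfar : ∀ x ∈ X, x ∉ Y → volume.real (ball y ρ ∩ ball x ρ') = 0 := fun x hx hxY => by
    have hlt : ρ + ρ' < dist y x := by
      simpa [Y, hx, dist_comm x y] using hxY
    rw [(ball_disjoint_ball hlt.le).inter_eq, measureReal_empty]
  calc ∑ x ∈ X, volume.real (ball y ρ ∩ ball x ρ')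
      = ∑ x ∈ Y, volume.real (ball y ρ ∩ ball x ρ') :=
        (Finset.sum_subset (Finset.filter_subset _ _) hfar).symm
    _ ≤ #Y • (2 * ρ') := Finset.sum_le_card_nsmul _ _ _ fun x _ =>
        (measureReal_mono inter_subset_right measure_ball_lt_top.ne).trans_eq
          (Real.volume_real_ball hρ')
    _ ≤ (2 * N * (ρ + ρ') + 2) * (2 * ρ') := by
        rw [nsmul_eq_mul]
        gcongr
        linarith

end DistinctCells

section SecondMoment

variable {N w : ℕ → ℝ} {X : ℕ → Finset ℝ} {F : Finset ℕ} {L : ℝ}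

lemma sum_sum_volume_ball_inter_ball_le {j k : ℕ} (hNj : 0 < N j) (hNk : 0 < N k) (hwj : 0 ≤ w j)
    (hwk : w k ∈ Icc 0 1) (hXk : DistinctCells (N k) (X k))
    (hcard : (#(X j) : ℝ) ≤ 2 * (N j * L)) :
    ∑ x ∈ X j, ∑ y ∈ X k, volume.real (ball x (w j / N j) ∩ ball y (w k / N k)) ≤
      8 * L * w k * (w j + 2 * (N j / N k)) := by
  obtain ⟨hwk0, hwk1⟩ := hwk
  have hL : 0 ≤ L := by
    have : 0 ≤ N j * L := by linarith [(#(X j)).cast_nonneg (α := ℝ)]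
    exact nonneg_of_mul_nonneg_right this hNj
  have hNρ : 2 * N k * (w j / N j + w k / N k) + 2 ≤ 2 * N k * (w j / N j) + 4 := by
    have : N k * (w k / N k) = w k := mul_div_cancel₀ _ hNk.ne'
    linarith
  calc ∑ x ∈ X j, ∑ y ∈ X k, volume.real (ball x (w j / N j) ∩ ball y (w k / N k))
      ≤ #(X j) • ((2 * N k * (w j / N j + w k / N k) + 2) * (2 * (w k / N k))) :=
        Finset.sum_le_card_nsmul _ _ _ fun x _ => hXk.sum_volume_ball_inter_ball_le hNk.le
          (by positivity) (by positivity) x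
    _ ≤ 2 * (N j * L) * ((2 * N k * (w j / N j) + 4) * (2 * (w k / N k))) := by
        rw [nsmul_eq_mul]
        gcongr
    _ = 8 * L * w k * (w j + 2 * (N j / N k)) := by
        field_simp
        ring

lemma sum_volume_ball_inter_ball_lower_levels_le (hN0 : ∀ k, 0 < N k)
    (hN : ∀ k, 2 * N k ≤ N (k + 1)) (hw : ∀ k, w k ∈ Icc 0 1) (hL : 0 ≤ L)
    (hcells : ∀ k ∈ F, DistinctCells (N k) (X k)) (hcard : ∀ k ∈ F, (#(X k) : ℝ) ≤ 2 * (N k * L))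
    (hF : 1 ≤ ∑ k ∈ F, w k) {k : ℕ} (hk : k ∈ F) :
    ∑ j ∈ F with j ≤ k, ∑ x ∈ X j, ∑ y ∈ X k,
        volume.real (ball x (w j / N j) ∩ ball y (w k / N k)) ≤
      8 * L * w k * (5 * ∑ j ∈ F, w j) := by
  have hmass : ∑ j ∈ F with j ≤ k, w j ≤ ∑ j ∈ F, w j :=
    Finset.sum_le_sum_of_subset_of_nonneg (Finset.filter_subset _ _) fun j _ _ => (hw j).1
  have hscale : ∑ j ∈ F with j ≤ k, N j / N k ≤ 2 := by
    rw [← Finset.sum_div, div_le_iff₀ (hN0 k)]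
    exact sum_le_two_mul_of_two_mul_le (fun k => (hN0 k).le) hN F k
  calc ∑ j ∈ F with j ≤ k, ∑ x ∈ X j, ∑ y ∈ X k,
        volume.real (ball x (w j / N j) ∩ ball y (w k / N k))
      ≤ ∑ j ∈ F with j ≤ k, 8 * L * w k * (w j + 2 * (N j / N k)) :=
        Finset.sum_le_sum fun j hj => sum_sum_volume_ball_inter_ball_le (hN0 j) (hN0 k)
          (hw j).1 (hw k) (hcells k hk) (hcard j (Finset.mem_filter.1 hj).1)
    _ = 8 * L * w k * (∑ j ∈ F with j ≤ k, w j + 2 * ∑ j ∈ F with j ≤ k, N j / N k) := by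
        rw [← Finset.mul_sum, Finset.sum_add_distrib, ← Finset.mul_sum]
    _ ≤ 8 * L * w k * (5 * ∑ j ∈ F, w j) := by
        have := (hw k).1
        gcongr
        linarith

lemma sum_sigma_volume_ball_inter_ball_le (hN0 : ∀ k, 0 < N k) (hN : ∀ k, 2 * N k ≤ N (k + 1))
    (hw : ∀ k, w k ∈ Icc 0 1) (hL : 0 ≤ L) (hcells : ∀ k ∈ F, DistinctCells (N k) (X k))
    (hcard : ∀ k ∈ F, (#(X k) : ℝ) ≤ 2 * (N k * L)) (hF : 1 ≤ ∑ k ∈ F, w k) :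
    ∑ s ∈ F.sigma X, ∑ t ∈ F.sigma X,
        volume.real (ball s.2 (w s.1 / N s.1) ∩ ball t.2 (w t.1 / N t.1)) ≤
      80 * L * (∑ k ∈ F, w k) ^ 2 := by
  set W := ∑ k ∈ F, w k
  set V : ℕ → ℕ → ℝ := fun k j =>
    ∑ x ∈ X j, ∑ y ∈ X k, volume.real (ball x (w j / N j) ∩ ball y (w k / N k)) with hV
  have hV0 : ∀ k j, 0 ≤ V k j := fun k j => by positivity
  have hVsymm : ∀ k j, V k j = V j k := fun k j => by
    simp only [hV]
    rw [Finset.sum_comm]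
    simp only [inter_comm]
  calc ∑ s ∈ F.sigma X, ∑ t ∈ F.sigma X,
        volume.real (ball s.2 (w s.1 / N s.1) ∩ ball t.2 (w t.1 / N t.1))
      = ∑ j ∈ F, ∑ k ∈ F, V k j := by
        simp only [Finset.sum_sigma, hV]
        exact Finset.sum_congr rfl fun j _ => Finset.sum_comm
    _ ≤ 2 * ∑ k ∈ F, ∑ j ∈ F with j ≤ k, V k j := by
        rw [Finset.sum_comm]
        exact sum_sum_le_two_mul_of_symm hV0 hVsymm
    _ ≤ 2 * ∑ k ∈ F, 8 * L * w k * (5 * W) := by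
        gcongr with k hk
        exact sum_volume_ball_inter_ball_lower_levels_le hN0 hN hw hL hcells hcard hF hk
    _ = 80 * L * W ^ 2 := by
        rw [← Finset.sum_mul, ← Finset.mul_sum]
        ring

lemma le_volume_biUnion_ball (hN0 : ∀ k, 0 < N k) (hN : ∀ k, 2 * N k ≤ N (k + 1))
    (hw : ∀ k, w k ∈ Icc 0 1) (hL : 0 < L) {c : ℝ} (hc : 0 ≤ c)
    (hcells : ∀ k ∈ F, DistinctCells (N k) (X k))
    (hcard : ∀ k ∈ F, (#(X k) : ℝ) ≤ 2 * (N k * L)) (hcard' : ∀ k ∈ F, c * (N k * L) ≤ #(X k))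
    (hF : 1 ≤ ∑ k ∈ F, w k) :
    c ^ 2 / 20 * L ≤ volume.real (⋃ t ∈ F.sigma X, ball t.2 (w t.1 / N t.1)) := by
  set W := ∑ k ∈ F, w k
  set V := volume.real (⋃ t ∈ F.sigma X, ball t.2 (w t.1 / N t.1))
  have hfirst : 2 * c * L * W ≤ ∑ t ∈ F.sigma X, volume.real (ball t.2 (w t.1 / N t.1)) := by
    rw [Finset.sum_sigma, Finset.mul_sum]
    refine Finset.sum_le_sum fun k hk => ?_
    have hρ : 0 ≤ w k / N k := div_nonneg (hw k).1 (hN0 k).le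
    calc 2 * c * L * w k = c * (N k * L) * (2 * (w k / N k)) := by
          have := (hN0 k).ne'
          field_simp
      _ ≤ #(X k) * (2 * (w k / N k)) := by
          gcongr
          exact hcard' k hk
      _ = ∑ x ∈ X k, volume.real (ball x (w k / N k)) := by
          simp [Real.volume_real_ball hρ]
  have hmoments : (2 * c * L * W) ^ 2 ≤ V * (80 * L * W ^ 2) :=
    calc (2 * c * L * W) ^ 2
        ≤ (∑ t ∈ F.sigma X, volume.real (ball t.2 (w t.1 / N t.1))) ^ 2 := by gcongr
      _ ≤ _ := sq_sum_measureReal_le (fun _ => measurableSet_ball) fun _ => measure_ball_lt_top.ne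
      _ ≤ V * (80 * L * W ^ 2) := by
          gcongr
          exact sum_sigma_volume_ball_inter_ball_le hN0 hN hw hL.le hcells hcard hF
  refine le_of_mul_le_mul_right ?_ (show 0 < 80 * L * W ^ 2 by positivity)
  linarith

end SecondMoment

/-- A Baker–Schmidt type regular system along the levels `κ`, with scales `N` and constant `c`:
every interval `[u, v)` contains, at each sufficiently large level `k ∈ κ`, at least
`c * N k * (v - u)` points of `R k` lying in distinct cells of length `1 / N k`. -/
def IsRegularSystem (R : ℕ → Set ℝ) (κ : Set ℕ) (N : ℕ → ℝ) (c : ℝ) : Prop :=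
  ∀ ⦃u v : ℝ⦄, u < v → ∀ᶠ k in atTop, k ∈ κ → ∃ X : Finset ℝ,
    ↑X ⊆ R k ∩ Ico u v ∧ DistinctCells (N k) X ∧ c * (N k * (v - u)) ≤ #X

namespace IsRegularSystem

variable {R : ℕ → Set ℝ} {κ : Set ℕ} {N w : ℕ → ℝ} {c : ℝ}

lemma le_volume_iUnion_thickening_inter_closedBall (hR : IsRegularSystem R κ N c) (hc : 0 ≤ c)
    (hN0 : ∀ k, 0 < N k) (hN : ∀ k, 2 * N k ≤ N (k + 1)) (hw : ∀ k, w k ∈ Icc 0 1)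
    (hdiv : ¬Summable (κ.indicator w)) (K : ℕ) (x : ℝ) {r : ℝ} (hr : 0 < r) :
    c ^ 2 / 20 * r ≤
      volume.real ((⋃ k ∈ κ ∩ Ici K, thickening (w k / N k) (R k)) ∩ closedBall x r) := by
  have hNtop : Tendsto N atTop atTop :=
    tendsto_atTop_of_geom_le (hN0 0) one_lt_two hN
  obtain ⟨F, hF, hFw⟩ := exists_finset_one_le_sum_of_not_summable_indicator (fun k => (hw k).1)
    hdiv (((hR (show x - r / 2 < x + r / 2 by linarith)).and
      (hNtop.eventually_ge_atTop (2 / r))).and (eventually_ge_atTop K))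
  choose! X hXR hcells hcard' using fun k hk => (hF k hk).1.1.1 (hF k hk).2
  have hNr : ∀ k ∈ F, 2 ≤ N k * r := fun k hk => (div_le_iff₀ hr).1 (hF k hk).1.1.2
  have hlen : x + r / 2 - (x - r / 2) = r := by ring
  simp only [hlen] at hcard'
  have hcard : ∀ k ∈ F, (#(X k) : ℝ) ≤ 2 * (N k * r) := fun k hk => by
    have h := (hcells k hk).card_le (hN0 k).le (show x - r / 2 ≤ x + r / 2 by linarith)
      fun y hy => Ico_subset_Icc_self (hXR k hk hy).2
    rw [hlen] at h
    linarith [hNr k hk]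
  refine (le_volume_biUnion_ball hN0 hN hw hr hc hcells hcard hcard' hFw).trans
    (measureReal_mono ?_ ((measure_mono inter_subset_right).trans_lt measure_closedBall_lt_top).ne)
  refine iUnion₂_subset fun ⟨k, y⟩ ht => ?_
  obtain ⟨hk, hy⟩ := Finset.mem_sigma.1 ht
  have hyR := hXR k hk hy
  refine subset_inter ((ball_subset_thickening hyR.1 _).trans
    (subset_biUnion_of_mem (u := fun k => thickening (w k / N k) (R k))
      ⟨(hF k hk).2, (hF k hk).1.2⟩))
    (ball_subset_closedBall.trans (closedBall_subset_closedBall' ?_))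
  have hρ : w k / N k ≤ r / 2 := by
    rw [div_le_iff₀ (hN0 k)]
    linarith [hNr k hk, (hw k).2]
  have hdist : dist y x ≤ r / 2 := by
    rw [Real.dist_eq, abs_le]
    constructor <;> linarith [hyR.2.1, hyR.2.2]
  linarith

theorem ae_frequently_mem_thickening (hR : IsRegularSystem R κ N c) (hc : 0 < c)
    (hN0 : ∀ k, 0 < N k) (hN : ∀ k, 2 * N k ≤ N (k + 1)) (hw : ∀ k, w k ∈ Icc 0 1)
    (hdiv : ¬Summable (κ.indicator w)) :
    ∀ᵐ α : ℝ, ∃ᶠ k in atTop, k ∈ κ ∧ α ∈ thickening (w k / N k) (R k) := by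
  have htail : ∀ K : ℕ, ∀ᵐ α : ℝ, α ∈ ⋃ k ∈ κ ∩ Ici K, thickening (w k / N k) (R k) := fun K => by
    refine ae_mem_of_frequently_le_measure_inter_div (c := ENNReal.ofReal (c ^ 2 / 40))
      (isOpen_biUnion fun k _ => isOpen_thickening).measurableSet (by simpa using by positivity)
      fun x => Eventually.frequently ?_
    filter_upwards [self_mem_nhdsWithin] with r (hr : 0 < r)
    rw [ENNReal.le_div_iff_mul_le (.inl (measure_closedBall_pos _ _ hr).ne')
      (.inl measure_closedBall_lt_top.ne), Real.volume_closedBall,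
      ← ENNReal.ofReal_mul (by positivity)]
    refine ENNReal.ofReal_le_of_le_toReal (le_trans (le_of_eq ?_)
      (hR.le_volume_iUnion_thickening_inter_closedBall hc.le hN0 hN hw hdiv K x hr))
    ring
  filter_upwards [ae_all_iff.2 htail] with α hα
  refine frequently_atTop.2 fun K => ?_
  obtain ⟨k, ⟨hk, hKk⟩, hmem⟩ := mem_iUnion₂.1 (hα K)
  exact ⟨k, hKk, hk, hmem⟩

end IsRegularSystem

/-! ### Shifted fractions in short cells -/

/-- The shifted fraction `(a + σ) / q`, indexed by the pair `⟨q, a⟩`. Pairs are elements of a sigma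
type so that a family of them is a `Finset.sigma` over its denominators. -/
noncomputable def shiftedFraction (σ : ℝ) (t : Σ _ : ℕ, ℤ) : ℝ := (t.2 + σ) / t.1

/-- The shifted fraction `(a + σ) / q` lies within `1 / (2 * h * q)` of a reduced fraction `p / h`
with `h ≤ H`; written without division. -/
def NearSmallFraction (σ : ℝ) (H : ℕ) (t : Σ _ : ℕ, ℤ) : Prop :=
  ∃ h ∈ Finset.Icc 1 H, ∃ p : ℤ, IsCoprime (h : ℤ) p ∧ |h * (t.2 + σ) - p * t.1| < 1 / 2

section NearSmallFraction

variable {σ u v : ℝ} {Q H h : ℕ} {s t : Σ _ : ℕ, ℤ} {P : Finset (Σ _ : ℕ, ℤ)}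

lemma nearSmallFraction_of_abs_lt {p : ℤ} (h0 : 0 < h) (hH : h ≤ H)
    (hp : |h * (t.2 + σ) - p * t.1| < 1 / 2) : NearSmallFraction σ H t := by
  obtain ⟨g, h', p', hg, hcop, hhg, rfl⟩ :=
    Int.exists_gcd_one' (Int.gcd_pos_of_ne_zero_left p (Int.natCast_ne_zero.2 h0.ne'))
  lift h' to ℕ using nonneg_of_mul_nonneg_left (hhg ▸ h.cast_nonneg) (Int.natCast_pos.2 hg)
  obtain rfl : h = h' * g := by exact_mod_cast hhg
  refine ⟨h', Finset.mem_Icc.2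
    ⟨Nat.pos_of_mul_pos_right h0, (Nat.le_mul_of_pos_right h' hg).trans hH⟩,
    p', Int.isCoprime_iff_gcd_eq_one.2 hcop, ?_⟩
  calc |h' * (t.2 + σ) - p' * t.1| ≤ g * |h' * (t.2 + σ) - p' * t.1| :=
        le_mul_of_one_le_left (abs_nonneg _) (mod_cast hg)
    _ = |(h' * g : ℕ) * (t.2 + σ) - (p' * g : ℤ) * t.1| := by
        rw [← Nat.abs_cast g, ← abs_mul]
        push_cast
        ring_nf
    _ < 1 / 2 := hp

lemma mul_shiftedFraction_sub (hs : 0 < s.1) (ht : 0 < t.1) :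
    s.1 * t.1 * (shiftedFraction σ s - shiftedFraction σ t) =
      ((t.1 : ℝ) - s.1) * (s.2 + σ) - (t.2 - s.2 : ℤ) * s.1 := by
  have hs' : (s.1 : ℝ) ≠ 0 := by positivity
  have ht' : (t.1 : ℝ) ≠ 0 := by positivity
  simp only [shiftedFraction]
  push_cast
  field_simp
  ring

-- The difference of the numerators over that of the denominators is the small fraction near `s`.
lemma fst_add_lt_fst_of_floor_eq (hs : s.1 ∈ Finset.Ico Q (2 * Q)) (ht : t.1 ∈ Finset.Ico Q (2 * Q))
    (hcell : ⌊16 * (Q : ℝ) ^ 2 * shiftedFraction σ s⌋ = ⌊16 * (Q : ℝ) ^ 2 * shiftedFraction σ t⌋)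
    (hst : s ≠ t) (hle : s.1 ≤ t.1) (hfar : ¬NearSmallFraction σ H s) : s.1 + H < t.1 := by
  obtain ⟨q, a⟩ := s
  obtain ⟨q', a'⟩ := t
  simp only [Finset.mem_Ico] at hs ht hle
  have hQ : 0 < Q := by lia
  have hdist := Int.abs_sub_lt_one_of_floor_eq_floor hcell
  rw [← mul_sub, abs_mul, abs_of_nonneg (by positivity)] at hdist
  have hdet : |((q' : ℝ) - q) * (a + σ) - (a' - a : ℤ) * q| < 1 / 2 := by
    rw [← mul_shiftedFraction_sub (s := ⟨q, a⟩) (t := ⟨q', a'⟩) (by lia) (by lia), abs_mul,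
      abs_of_nonneg (by positivity)]
    have hq : (q : ℝ) ≤ 2 * Q := by exact_mod_cast hs.2.le
    have hq' : (q' : ℝ) ≤ 2 * Q := by exact_mod_cast ht.2.le
    calc (q : ℝ) * q' * |shiftedFraction σ ⟨q, a⟩ - shiftedFraction σ ⟨q', a'⟩|
        ≤ 2 * Q * (2 * Q) * |shiftedFraction σ ⟨q, a⟩ - shiftedFraction σ ⟨q', a'⟩| := by gcongr
      _ < 1 / 2 := by linarith
  rcases hle.eq_or_lt with rfl | hlt
  · have hsmall : |(a' - a) * (q : ℤ)| < 1 := by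
      have : |((a' - a : ℤ) * q : ℝ)| < 1 := by
        simp only [sub_self, zero_mul, zero_sub, abs_neg] at hdet
        linarith
      exact_mod_cast this
    have hzero := Int.abs_lt_one_iff.1 hsmall
    have : a' = a := by
      rcases mul_eq_zero.1 hzero with h | h <;> lia
    exact absurd (by rw [this]) hst
  · by_contra! hgap
    refine hfar (nearSmallFraction_of_abs_lt (h := q' - q) (p := a' - a) (by lia) (by lia) ?_)
    rwa [Nat.cast_sub hlt.le]

lemma card_le_of_not_nearSmallFraction_of_floor_eq {K : ℕ} (hK : 0 < K) {m : ℤ}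
    (hP : ∀ t ∈ P, t.1 ∈ Finset.Ico Q (2 * Q) ∧ ¬NearSmallFraction σ (Q / K) t ∧
      ⌊16 * (Q : ℝ) ^ 2 * shiftedFraction σ t⌋ = m) :
    #P ≤ K := by
  have hcard := card_le_div_add_one_of_gap (Q / K).succ_pos (n := Q)
    (fun t ht => two_mul Q ▸ (hP t ht).1) fun s hs t ht hst hle =>
      fst_add_lt_fst_of_floor_eq (hP s hs).1 (hP t ht).1
        ((hP s hs).2.2.trans (hP t ht).2.2.symm) hst hle (hP s hs).2.1
  have hlt : Q / (Q / K + 1) < K :=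
    (Nat.div_lt_iff_lt_mul (Q / K).succ_pos).2 (Nat.lt_mul_div_succ Q hK)
  exact hcard.trans hlt

lemma card_le_of_near_reduced_fraction {p : ℤ} (h0 : 0 < h) (hcop : IsCoprime (h : ℤ) p)
    (hP : ∀ t ∈ P, t.1 ∈ Finset.Ico Q (2 * Q) ∧ |h * (t.2 + σ) - p * t.1| < 1 / 2) :
    #P ≤ Q / h + 1 := by
  refine card_le_div_add_one_of_gap h0 (f := Sigma.fst) (fun t ht => two_mul Q ▸ (hP t ht).1) ?_
  rintro ⟨q, a⟩ hs ⟨q', a'⟩ ht hne hle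
  have hproportional : (h : ℤ) * (a' - a) = p * (q' - q) := by
    have hlt : |((h * (a' - a) - p * (q' - q) : ℤ) : ℝ)| < 1 :=
      calc _ = |(h * (a' + σ) - p * q') - (h * (a + σ) - p * q)| := by
            push_cast
            ring_nf
        _ ≤ |h * (a' + σ) - p * q'| + |h * (a + σ) - p * q| := abs_sub _ _
        _ < 1 := by linarith [(hP _ hs).2, (hP _ ht).2]
    exact sub_eq_zero.1 (Int.abs_lt_one_iff.1 (by exact_mod_cast hlt))
  have hdvd : (h : ℤ) ∣ q' - q := hcop.dvd_of_dvd_mul_left ⟨_, hproportional.symm⟩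
  have hlt : q < q' := hle.lt_of_ne fun heq => hne <| by
    subst heq
    have : (h : ℤ) * (a' - a) = 0 := by simpa using hproportional
    rcases mul_eq_zero.1 this with h' | h'
    · lia
    · rw [sub_eq_zero.1 h']
  have := Int.le_of_dvd (by lia) hdvd
  change q + h ≤ q'
  lia

lemma floor_mul_shiftedFraction_add_half (ht : 0 < t.1) {p : ℤ}
    (hp : |h * (t.2 + σ) - p * t.1| < 1 / 2) : ⌊h * shiftedFraction σ t + 1 / 2⌋ = p := by
  have ht' : (t.1 : ℝ) ≠ 0 := by positivity
  have hlt : |h * shiftedFraction σ t - p| < 1 / 2 :=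
    calc |h * shiftedFraction σ t - p| ≤ t.1 * |h * shiftedFraction σ t - p| :=
          le_mul_of_one_le_left (abs_nonneg _) (mod_cast ht)
      _ = |h * (t.2 + σ) - p * t.1| := by
          rw [← Nat.abs_cast t.1, ← abs_mul, Nat.abs_cast, shiftedFraction]
          field_simp
      _ < 1 / 2 := hp
  rw [abs_lt] at hlt
  exact Int.floor_eq_iff.2 ⟨by linarith, by linarith⟩

lemma card_le_of_near_denominator (huv : u ≤ v) (h0 : 0 < h) (hQ : h ≤ Q)
    (hP : ∀ t ∈ P, t.1 ∈ Finset.Ico Q (2 * Q) ∧ shiftedFraction σ t ∈ Ico u v ∧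
      ∃ p : ℤ, IsCoprime (h : ℤ) p ∧ |h * (t.2 + σ) - p * t.1| < 1 / 2) :
    (#P : ℝ) ≤ (h * (v - u) + 2) * (2 * (Q / h)) := by
  have hround : ∀ t ∈ P, ∀ p : ℤ, |h * (t.2 + σ) - p * t.1| < 1 / 2 →
      ⌊h * shiftedFraction σ t + 1 / 2⌋ = p := fun t ht p =>
    floor_mul_shiftedFraction_add_half
      (h0.trans_le (hQ.trans (Finset.mem_Ico.1 (hP t ht).1).1))
  have hmaps : ∀ t ∈ P, ⌊h * shiftedFraction σ t + 1 / 2⌋ ∈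
      Finset.Icc ⌊h * u + 1 / 2⌋ ⌊h * v + 1 / 2⌋ := fun t ht => by
    obtain ⟨-, ⟨hu, hv⟩, -⟩ := hP t ht
    exact Finset.mem_Icc.2 ⟨by gcongr, by gcongr⟩
  have hfiber : ∀ p ∈ Finset.Icc ⌊h * u + 1 / 2⌋ ⌊h * v + 1 / 2⌋,
      #{t ∈ P | ⌊h * shiftedFraction σ t + 1 / 2⌋ = p} ≤ Q / h + 1 := fun p _ => by
    have hnear : ∀ t ∈ P, ⌊h * shiftedFraction σ t + 1 / 2⌋ = p →
        IsCoprime (h : ℤ) p ∧ |h * (t.2 + σ) - p * t.1| < 1 / 2 := fun t ht hp => by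
      obtain ⟨-, -, p', hcop, hp'⟩ := hP t ht
      obtain rfl := (hround t ht p' hp').symm.trans hp
      exact ⟨hcop, hp'⟩
    obtain hempty | ⟨t, ht⟩ :=
      Finset.eq_empty_or_nonempty {t ∈ P | ⌊h * shiftedFraction σ t + 1 / 2⌋ = p}
    · rw [hempty, Finset.card_empty]
      exact Nat.zero_le _
    · simp only [Finset.mem_filter] at ht
      refine card_le_of_near_reduced_fraction (σ := σ) h0 (hnear t ht.1 ht.2).1 fun s hs => ?_
      rw [Finset.mem_filter] at hs
      exact ⟨(hP s hs.1).1, (hnear s hs.1 hs.2).2⟩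
  have hdiv : ((Q / h + 1 : ℕ) : ℝ) ≤ 2 * (Q / h) := by
    have : (1 : ℝ) ≤ Q / h := (one_le_div (by positivity)).2 (mod_cast hQ)
    push_cast
    linarith [Nat.cast_div_le (m := Q) (n := h) (α := ℝ)]
  calc (#P : ℝ) ≤ (Q / h + 1 : ℕ) * #(Finset.Icc ⌊h * u + 1 / 2⌋ ⌊h * v + 1 / 2⌋) :=
        mod_cast Finset.card_le_mul_card_image_of_maps_to hmaps _ hfiber
    _ ≤ 2 * (Q / h) * (h * v + 1 / 2 - (h * u + 1 / 2) + 2) := by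
        gcongr
        exact card_Icc_floor_le (by gcongr)
    _ = (h * (v - u) + 2) * (2 * (Q / h)) := by ring

lemma card_nearSmallFraction_le (huv : u ≤ v) (hHQ : H ≤ Q)
    (hP : ∀ t ∈ P, t.1 ∈ Finset.Ico Q (2 * Q) ∧ shiftedFraction σ t ∈ Ico u v ∧
      NearSmallFraction σ H t) :
    (#P : ℝ) ≤ 2 * Q * H * (v - u) + 4 * Q * (1 + Real.log Q) := by
  classical
  set B : ℕ → Finset (Σ _ : ℕ, ℤ) := fun h =>
    {t ∈ P | ∃ p : ℤ, IsCoprime (h : ℤ) p ∧ |h * (t.2 + σ) - p * t.1| < 1 / 2}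
  have hcover : P ⊆ (Finset.Icc 1 H).biUnion B := fun t ht => by
    obtain ⟨h, hh, hp⟩ := (hP t ht).2.2
    exact Finset.mem_biUnion.2 ⟨h, hh, Finset.mem_filter.2 ⟨ht, hp⟩⟩
  have hharmonic : ∑ h ∈ Finset.Icc 1 H, (h : ℝ)⁻¹ ≤ 1 + Real.log Q := by
    have hmono : ∑ h ∈ Finset.Icc 1 H, (h : ℝ)⁻¹ ≤ ∑ h ∈ Finset.Icc 1 Q, (h : ℝ)⁻¹ :=
      Finset.sum_le_sum_of_subset_of_nonneg (Finset.Icc_subset_Icc_right hHQ)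
        fun h _ _ => by positivity
    have hlog := harmonic_le_one_add_log Q
    rw [harmonic_eq_sum_Icc] at hlog
    push_cast at hlog
    exact hmono.trans hlog
  calc (#P : ℝ) ≤ ∑ h ∈ Finset.Icc 1 H, (#(B h) : ℝ) :=
        mod_cast (Finset.card_le_card hcover).trans Finset.card_biUnion_le
    _ ≤ ∑ h ∈ Finset.Icc 1 H, (h * (v - u) + 2) * (2 * (Q / h)) := by
        refine Finset.sum_le_sum fun h hh => ?_
        obtain ⟨h1, hhH⟩ := Finset.mem_Icc.1 hh
        refine card_le_of_near_denominator (σ := σ) huv h1 (hhH.trans hHQ) fun t ht => ?_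
        rw [Finset.mem_filter] at ht
        exact ⟨(hP t ht.1).1, (hP t ht.1).2.1, ht.2⟩
    _ = ∑ h ∈ Finset.Icc 1 H, (2 * Q * (v - u) + 4 * Q * (h : ℝ)⁻¹) := by
        refine Finset.sum_congr rfl fun h hh => ?_
        have : (h : ℝ) ≠ 0 := mod_cast Nat.one_le_iff_ne_zero.1 (Finset.mem_Icc.1 hh).1
        field_simp
        ring
    _ = 2 * Q * H * (v - u) + 4 * Q * ∑ h ∈ Finset.Icc 1 H, (h : ℝ)⁻¹ := by
        rw [Finset.sum_add_distrib, Finset.mul_sum, Finset.sum_const, Nat.card_Icc,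
          Nat.add_sub_cancel, nsmul_eq_mul]
        ring
    _ ≤ 2 * Q * H * (v - u) + 4 * Q * (1 + Real.log Q) := by gcongr

lemma exists_distinctCells_card_le_mul {K : ℕ} (hK : 0 < K)
    (hP : ∀ t ∈ P, t.1 ∈ Finset.Ico Q (2 * Q) ∧ ¬NearSmallFraction σ (Q / K) t) :
    ∃ X : Finset ℝ, ↑X ⊆ shiftedFraction σ '' P ∧ DistinctCells (16 * Q ^ 2) X ∧
      #P ≤ K * #X := by
  classical
  set cell : ℝ → ℤ := fun x => ⌊16 * (Q : ℝ) ^ 2 * x⌋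
  obtain ⟨X, hXP, hX, himage⟩ := Finset.exists_subset_injOn_image_eq_of_surjOn
    (shiftedFraction σ '' P) (P.image (cell ∘ shiftedFraction σ))
    (f := cell) (by rw [Finset.coe_image, image_comp]; exact surjOn_image _ _)
  refine ⟨X, hXP, hX, ?_⟩
  calc #P ≤ K * #(P.image (cell ∘ shiftedFraction σ)) :=
        Finset.card_le_mul_card_image P K fun m _ =>
          card_le_of_not_nearSmallFraction_of_floor_eq (σ := σ) hK fun t ht => by
            rw [Finset.mem_filter] at ht
            exact ⟨(hP t ht.1).1, (hP t ht.1).2, ht.2⟩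
    _ ≤ K * #X := by
        rw [← himage]
        gcongr
        exact Finset.card_image_le

end NearSmallFraction

lemma exists_finset_shiftedFraction_mem_Ico {Q : ℕ} {S : Finset ℕ} (hQ : 0 < Q)
    (hS : S ⊆ Finset.Ico Q (2 * Q)) (σ : ℝ) {u v : ℝ} (huv : u ≤ v) :
    ∃ P : Finset (Σ _ : ℕ, ℤ), (∀ t ∈ P, t.1 ∈ S ∧ shiftedFraction σ t ∈ Ico u v) ∧
      #S * (Q * (v - u) - 1) ≤ (#P : ℝ) := by
  refine ⟨S.sigma fun q => Finset.Ico ⌈q * u - σ⌉ ⌈q * v - σ⌉, ?_, ?_⟩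
  · rintro ⟨q, a⟩ ht
    obtain ⟨hq, ha⟩ := Finset.mem_sigma.1 ht
    have hq0 : (0 : ℝ) < q := mod_cast hQ.trans_le (Finset.mem_Ico.1 (hS hq)).1
    rw [Finset.mem_Ico, Int.ceil_le, Int.lt_ceil] at ha
    refine ⟨hq, (le_div_iff₀ hq0).2 ?_, (div_lt_iff₀ hq0).2 ?_⟩ <;> dsimp only <;> linarith
  · rw [Finset.card_sigma, Nat.cast_sum, ← nsmul_eq_mul]
    refine Finset.card_nsmul_le_sum _ _ _ fun q hq => ?_
    have hqQ : (Q : ℝ) ≤ q := mod_cast (Finset.mem_Ico.1 (hS hq)).1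
    have hcard : ((⌈q * v - σ⌉ - ⌈q * u - σ⌉ : ℤ) : ℝ) ≤
        #(Finset.Ico ⌈q * u - σ⌉ ⌈q * v - σ⌉) := by
      rw [Int.card_Ico]
      exact_mod_cast Int.self_le_toNat _
    push_cast at hcard
    have hlen : Q * (v - u) ≤ q * (v - u) := by gcongr
    linarith [Int.le_ceil (q * v - σ), Int.ceil_lt_add_one (q * u - σ)]

lemma exists_finset_not_nearSmallFraction {Q H : ℕ} {S : Finset ℕ} (hQ : 0 < Q) (hHQ : H ≤ Q)
    (hS : S ⊆ Finset.Ico Q (2 * Q)) (σ : ℝ) {u v : ℝ} (huv : u ≤ v) :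
    ∃ P : Finset (Σ _ : ℕ, ℤ),
      (∀ t ∈ P, t.1 ∈ S ∧ shiftedFraction σ t ∈ Ico u v ∧ ¬NearSmallFraction σ H t) ∧
      #S * (Q * (v - u) - 1) - (2 * Q * H * (v - u) + 4 * Q * (1 + Real.log Q)) ≤ (#P : ℝ) := by
  classical
  obtain ⟨P, hP, hcard⟩ := exists_finset_shiftedFraction_mem_Ico hQ hS σ huv
  refine ⟨{t ∈ P | ¬NearSmallFraction σ H t}, fun t ht => ?_, ?_⟩
  · rw [Finset.mem_filter] at ht
    exact ⟨(hP t ht.1).1, (hP t ht.1).2, ht.2⟩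
  · have hnear := card_nearSmallFraction_le (σ := σ) (P := {t ∈ P | NearSmallFraction σ H t}) huv
      hHQ fun t ht => by
        rw [Finset.mem_filter] at ht
        exact ⟨hS (hP t ht.1).1, (hP t ht.1).2, ht.2⟩
    have hsplit := Finset.card_filter_add_card_filter_not (s := P) (NearSmallFraction σ H)
    have hsplit' : (#{t ∈ P | NearSmallFraction σ H t} : ℝ) +
        #{t ∈ P | ¬NearSmallFraction σ H t} = #P := mod_cast hsplit
    linarith

theorem eventually_exists_distinctCells {ℓ : ℕ} (hℓ : 0 < ℓ) {u v : ℝ} (huv : u < v) :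
    ∀ᶠ Q : ℕ in atTop, ∀ (σ : ℝ) (S : Finset ℕ), S ⊆ Finset.Ico Q (2 * Q) → Q ≤ ℓ * #S →
      ∃ X : Finset ℝ, (∀ x ∈ X, x ∈ Ico u v ∧ ∃ q ∈ S, ∃ a : ℤ, x = (a + σ) / q) ∧
        DistinctCells (16 * Q ^ 2) X ∧ Q ^ 2 * (v - u) ≤ 16 * ℓ ^ 2 * #X := by
  have hL : 0 < v - u := sub_pos.2 huv
  filter_upwards [eventually_gt_atTop 0,
    tendsto_natCast_atTop_atTop.eventually (eventually_ge_atTop (1 / (v - u))),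
    tendsto_natCast_atTop_atTop.eventually
      (eventually_add_mul_log_le 5 4 (show 0 < (v - u) / (4 * ℓ) by positivity))]
    with Q hQ hQL hlog σ S hS hcard
  rw [div_le_iff₀ hL] at hQL
  obtain ⟨P, hP, hPcard⟩ := exists_finset_not_nearSmallFraction (H := Q / (4 * ℓ)) hQ
    (Nat.div_le_self _ _) hS σ huv.le
  obtain ⟨X, hXP, hcells, hX⟩ := exists_distinctCells_card_le_mul (K := 4 * ℓ) (by lia) fun t ht =>
    ⟨hS (hP t ht).1, (hP t ht).2.2⟩
  refine ⟨X, fun x hx => ?_, hcells, ?_⟩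
  · obtain ⟨⟨q, a⟩, ht, rfl⟩ := hXP hx
    exact ⟨(hP _ ht).2.1, q, (hP _ ht).1, a, rfl⟩
  have hall : (Q : ℝ) / ℓ * (Q * (v - u) - 1) ≤ #S * (Q * (v - u) - 1) := by
    refine mul_le_mul_of_nonneg_right ?_ (by linarith)
    rw [div_le_iff₀' (by positivity)]
    exact_mod_cast hcard
  have hnear : 2 * Q * ((Q / (4 * ℓ) : ℕ) : ℝ) * (v - u) ≤ 2 * Q * (Q / (4 * ℓ)) * (v - u) := by
    gcongr
    exact Nat.cast_div_le.trans_eq (by push_cast; rfl)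
  have herror : (Q : ℝ) / ℓ + 4 * Q * (1 + Real.log Q) ≤ Q * ((v - u) / (4 * ℓ) * Q) := by
    have : (Q : ℝ) / ℓ ≤ Q := div_le_self (by positivity) (mod_cast hℓ)
    nlinarith
  have hfar : Q ^ 2 * (v - u) / (4 * ℓ) ≤ (#P : ℝ) :=
    calc Q ^ 2 * (v - u) / (4 * ℓ)
        = Q / ℓ * (Q * (v - u)) - 2 * Q * (Q / (4 * ℓ)) * (v - u) -
            Q * ((v - u) / (4 * ℓ) * Q) := by
          field_simp
          ring
      _ ≤ #P := by linarith
  have hX' : (#P : ℝ) ≤ 4 * ℓ * #X := mod_cast hX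
  have := (div_le_iff₀ (by positivity)).1 (hfar.trans hX')
  linarith

/-! ### Full measure along a dense set of denominators -/

/-- The set `A` contains a proportion at least `1 / ℓ` of the dyadic block
`[2 ^ k, 2 ^ (k + 1))`. -/
def HasBlockDensity (A : Set ℕ) (ℓ k : ℕ) : Prop :=
  2 ^ k ≤ ℓ * (A ∩ Ico (2 ^ k) (2 ^ (k + 1))).ncard

/-- The shifted fractions `(a + σ) / q` whose denominator `q` belongs to `A` and to the dyadic block
`[2 ^ k, 2 ^ (k + 1))`. -/
def blockFractions (A : Set ℕ) (σ : ℝ) (k : ℕ) : Set ℝ :=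
  {x | ∃ q ∈ A ∩ Ico (2 ^ k) (2 ^ (k + 1)), ∃ a : ℤ, x = (a + σ) / q}

lemma isRegularSystem_blockFractions {A κ : Set ℕ} {ℓ : ℕ} (hℓ : 0 < ℓ)
    (hA : ∀ k ∈ κ, HasBlockDensity A ℓ k) (σ : ℝ) :
    IsRegularSystem (blockFractions A σ) κ (fun k => 16 * (2 ^ k) ^ 2) (1 / (256 * ℓ ^ 2)) := by
  intro u v huv
  filter_upwards [(tendsto_pow_atTop_atTop_of_one_lt one_lt_two).eventually
    (eventually_exists_distinctCells hℓ huv)] with k hk hkκ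
  have hfin : (A ∩ Ico (2 ^ k) (2 ^ (k + 1))).Finite := (finite_Ico _ _).inter_of_right A
  obtain ⟨X, hX, hcells, hcard⟩ := hk σ hfin.toFinset
    (fun q hq => by simpa [pow_succ'] using ((hfin.mem_toFinset).1 hq).2)
    (by rw [← ncard_eq_toFinset_card _ hfin]; exact hA k hkκ)
  push_cast at hcells hcard
  refine ⟨X, fun x hx => ⟨?_, (hX x hx).1⟩, hcells, ?_⟩
  · obtain ⟨-, q, hq, a, rfl⟩ := hX x hx
    exact ⟨q, hfin.mem_toFinset.1 hq, a, rfl⟩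
  · rw [div_mul_eq_mul_div, div_le_iff₀ (by positivity)]
    linarith

lemma exists_distNearestInt_lt_of_mem_thickening {A : Set ℕ} {σ α δ : ℝ} {k : ℕ}
    (h : α ∈ thickening (δ / 2 ^ (k + 1)) (blockFractions A σ k)) :
    ∃ q ∈ A ∩ Ico (2 ^ k) (2 ^ (k + 1)), distNearestInt (q * α - σ) < δ := by
  obtain ⟨_, ⟨q, hq, a, rfl⟩, hdist⟩ := mem_thickening_iff.1 h
  have hq0 : (0 : ℝ) < q := mod_cast (Nat.two_pow_pos k).trans_le hq.2.1
  have hq2 : (q : ℝ) ≤ 2 ^ (k + 1) := mod_cast hq.2.2.le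
  refine ⟨q, hq, (round_le _ a).trans_lt ?_⟩
  rw [lt_div_iff₀ (by positivity), Real.dist_eq] at hdist
  calc |q * α - σ - a| = |α - (a + σ) / q| * q := by
        rw [← Nat.abs_cast q, ← abs_mul, Nat.abs_cast]
        field_simp
        ring_nf
    _ ≤ |α - (a + σ) / q| * 2 ^ (k + 1) := by gcongr
    _ < δ := hdist

theorem ae_frequently_distNearestInt_lt_of_hasBlockDensity {A κ : Set ℕ} {ℓ : ℕ} (hℓ : 0 < ℓ)
    (hA : ∀ k ∈ κ, HasBlockDensity A ℓ k) {ψ : ℕ → ℝ} (hψ0 : ∀ q, 0 ≤ ψ q)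
    (hψ : AntitoneOn ψ (Ici 1))
    (hdiv : ¬Summable (κ.indicator fun k => min (2 ^ (k + 1) * ψ (2 ^ (k + 1))) 1)) (σ : ℝ) :
    ∀ᵐ α : ℝ, ∃ᶠ q : ℕ in atTop, q ∈ A ∧ distNearestInt (q * α - σ) < ψ q := by
  have hmain := (isRegularSystem_blockFractions hℓ hA σ).ae_frequently_mem_thickening
    (by positivity) (fun k => by positivity) (fun k => by ring_nf; gcongr; norm_num)
    (fun k => ⟨le_min (mul_nonneg (by positivity) (hψ0 _)) zero_le_one, min_le_right _ _⟩) hdiv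
  filter_upwards [hmain] with α hα
  refine frequently_atTop.2 fun M => ?_
  obtain ⟨k, hk, -, hmem⟩ := frequently_atTop.1 hα M
  have hradius : min (2 ^ (k + 1) * ψ (2 ^ (k + 1))) 1 / (16 * (2 ^ k) ^ 2) ≤
      ψ (2 ^ (k + 1)) / 2 ^ (k + 1) := by
    calc _ ≤ 2 ^ (k + 1) * ψ (2 ^ (k + 1)) / (16 * (2 ^ k) ^ 2) := by
          gcongr
          exact min_le_left _ _
      _ = ψ (2 ^ (k + 1)) / 2 ^ (k + 1) / 4 := by
          field_simp
          ring
      _ ≤ ψ (2 ^ (k + 1)) / 2 ^ (k + 1) :=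
          div_le_self (div_nonneg (hψ0 _) (by positivity)) (by norm_num)
  obtain ⟨q, ⟨hqA, hkq, hqk⟩, hlt⟩ :=
    exists_distNearestInt_lt_of_mem_thickening (thickening_mono hradius _ hmem)
  exact ⟨q, hk.trans (k.lt_two_pow_self.le.trans hkq), hqA, hlt.trans_le
    (hψ (Nat.one_le_two_pow.trans hkq) Nat.one_le_two_pow hqk.le)⟩

lemma exists_hasBlockDensity_fiber {ι : Type*} [Fintype ι] [Nonempty ι] (f : ℕ → ι) (k : ℕ) :
    ∃ i, HasBlockDensity (f ⁻¹' {i}) (Fintype.card ι) k := by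
  classical
  obtain ⟨i, -, hi⟩ := Finset.exists_le_card_fiber_of_nsmul_le_card_of_maps_to
    (s := Finset.Ico (2 ^ k) (2 ^ (k + 1))) (t := Finset.univ) (f := f)
    (b := (2 ^ k / Fintype.card ι : ℚ)) (by simp) Finset.univ_nonempty
    (by simp [pow_succ, mul_two, mul_div_cancel₀])
  refine ⟨i, ?_⟩
  rw [div_le_iff₀' (by positivity)] at hi
  have hfiber : f ⁻¹' {i} ∩ Ico (2 ^ k) (2 ^ (k + 1)) =
      ({q ∈ Finset.Ico (2 ^ k) (2 ^ (k + 1)) | f q = i} : Finset ℕ) := by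
    ext q
    simp [and_comm]
  rw [HasBlockDensity, hfiber, ncard_coe_finset]
  exact_mod_cast hi

lemma not_summable_min_condensed {ψ : ℕ → ℝ} (hψ0 : ∀ q, 0 ≤ ψ q) (hψ : AntitoneOn ψ (Ici 1))
    (hdiv : ¬Summable ψ) :
    ¬Summable fun k : ℕ => min ((2 : ℝ) ^ (k + 1) * ψ (2 ^ (k + 1))) 1 := by
  refine fun h => hdiv ?_
  have hcondensed : Summable fun k : ℕ => (2 : ℝ) ^ k * ψ (2 ^ k) :=
    (summable_nat_add_iff 1).1 (summable_of_summable_min_one h)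
  exact (summable_condensed_iff_of_nonneg hψ0 fun m n hm hmn =>
    hψ hm (hm.trans_le hmn) hmn).1 hcondensed

theorem exists_ae_frequently_distNearestInt_lt_fiber {ι : Type*} [Finite ι] (f : ℕ → ι)
    {ψ : ℕ → ℝ} (hψ0 : ∀ q, 0 ≤ ψ q) (hψ : AntitoneOn ψ (Ici 1)) (hdiv : ¬Summable ψ) :
    ∃ i, ∀ σ : ℝ, ∀ᵐ α : ℝ, ∃ᶠ q : ℕ in atTop, f q = i ∧ distNearestInt (q * α - σ) < ψ q := by
  have := Fintype.ofFinite ι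
  have : Nonempty ι := ⟨f 0⟩
  choose c hc using fun k => exists_hasBlockDensity_fiber f k
  obtain ⟨i, hi⟩ :=
    exists_not_summable_indicator_fiber c (not_summable_min_condensed hψ0 hψ hdiv)
  refine ⟨i, ae_frequently_distNearestInt_lt_of_hasBlockDensity
    (Fintype.card_pos (α := ι)) ?_ hψ0 hψ hi⟩
  rintro k rfl
  exact hc k

lemma volume_WSet_eq_one_of_ae {ψ γ : ℕ → ℝ}
    (h : ∀ᵐ α : ℝ, ∃ᶠ q : ℕ in atTop, distNearestInt (q * α - γ q) < ψ q) :
    volume (WSet ψ γ) = 1 := by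
  have hW : WSet ψ γ =ᵐ[volume] Icc (0 : ℝ) 1 := by
    filter_upwards [h] with α hα
    exact propext <| and_iff_left <| Nat.frequently_atTop_iff_infinite.1 <|
      (hα.and_eventually (eventually_ge_atTop 1)).mono fun q hq => hq.symm
  rw [measure_congr hW, Real.volume_Icc, sub_zero, ENNReal.ofReal_one]

end

theorem stmt3 (ℓ : ℕ) (σ : Fin ℓ → ℝ) (γ : ℕ → ℝ)
    (hγ : ∀ q : ℕ, 1 ≤ q → ∃ k : Fin ℓ, γ q = σ k)
    (ψ : ℕ → ℝ) (hψ0 : ∀ q, 0 ≤ ψ q)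
    (hψdec : ∀ q r : ℕ, 1 ≤ q → q ≤ r → ψ r ≤ ψ q)
    (hdiv : ¬ Summable ψ) :
    (∃ k : Fin ℓ, volume (WSet ({q : ℕ | γ q = σ k}.indicator ψ) γ) = 1) ∧
      volume (WSet ψ γ) = 1 := by
  have : Nonempty (Fin ℓ) := ⟨(hγ 1 le_rfl).choose⟩
  choose! f hf using hγ
  obtain ⟨k, hk⟩ := exists_ae_frequently_distNearestInt_lt_fiber f hψ0
    (fun q hq r _ hqr => hψdec q r hq hqr) hdiv
  have hmain : ∀ᵐ α : ℝ, ∃ᶠ q : ℕ in Filter.atTop,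
      γ q = σ k ∧ distNearestInt (q * α - γ q) < ψ q := by
    filter_upwards [hk (σ k)] with α hα
    refine (hα.and_eventually (Filter.eventually_ge_atTop 1)).mono ?_
    rintro q ⟨⟨rfl, hlt⟩, hq⟩
    exact ⟨hf q hq, (hf q hq).symm ▸ hlt⟩
  refine ⟨⟨k, volume_WSet_eq_one_of_ae ?_⟩, volume_WSet_eq_one_of_ae ?_⟩
  · filter_upwards [hmain] with α hα
    exact hα.mono fun q hq =>
      hq.2.trans_eq (Set.indicator_of_mem (s := {q | γ q = σ k}) hq.1 ψ).symm
  · filter_upwards [hmain] with α hα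
    exact hα.mono fun q hq => hq.2
end

section
/- Let γ ∈ ℝ, let {π_1, …, π_ℓ} be a partition of ℕ, and let ψ:ℕ→ℝ≥0 be decreasing with ∑_{q=1}^∞ ψ(q) = ∞. Then there exists a partition element π ∈ {π_1, …, π_ℓ} such that meas(W(𝟙_{π}·ψ, γ)) = 1, where 𝟙_{π}·ψ equals ψ(q) for q ∈ π and 0 otherwise. -/
open MeasureTheory

/-!
Instead of the limit superior consider `dvdLimsup`, the set of points lying, for every `t`, in the
`q`-th set for some multiple `q` of `t`. Applied to the sets `‖q x - γ‖ < ψ q` on the circle it is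
invariant under all torsion translations, hence null or conull, and by the pigeonhole principle
every finite decomposition of `ψ` passes to it. So some part has full measure as soon as the
`dvdLimsup` set of `ψ` itself has positive measure. Multiplication by `t` preserves Haar measure, so
this follows from a lower bound for the measure of `⋃ q, {x | ‖q x - γ‖ < ψ q}` that is the same
for all decreasing `ψ` with divergent sum, applied to each `q ↦ ψ (t q)`.

For that bound, Dirichlet's theorem shows that the points `(a + γ) / q` with `q ∈ [Q, 2Q]` meet a
positive proportion of the cells of length `1 / Q ^ 2`. Choose in each such cell one interval close
to one of these points. If `Q` grows fast, the intervals of a new scale are equidistributed with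
respect to the union `U` of the old ones, up to the few cells cut by the boundary of `U`. While `U`
is small, each scale therefore adds a fixed proportion of its total length, and these lengths have
a divergent sum.
-/

open Set Filter
open scoped Nat Pointwise ENNReal

section DvdLimsup

variable {X ι : Type*} {s t : ℕ → Set X}

/-- The limit superior of a sequence of sets along the positive integers ordered by divisibility:
the points lying in `s q` for some positive multiple `q` of each positive `t`. -/
def dvdLimsup (s : ℕ → Set X) : Set X :=
  {x | ∀ t > 0, ∃ q > 0, t ∣ q ∧ x ∈ s q}

lemma dvdLimsup_mono (h : ∀ q > 0, s q ⊆ t q) : dvdLimsup s ⊆ dvdLimsup t := fun _ hx d hd ↦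
  let ⟨q, hq, hdq, hxq⟩ := hx d hd
  ⟨q, hq, hdq, h q hq hxq⟩

lemma infinite_setOf_mem_of_mem_dvdLimsup {x : X} (hx : x ∈ dvdLimsup s) :
    {q | 0 < q ∧ x ∈ s q}.Infinite := by
  refine infinite_of_forall_exists_gt fun N ↦ ?_
  obtain ⟨q, hq, hNq, hxq⟩ := hx (N + 1) N.succ_pos
  exact ⟨q, ⟨hq, hxq⟩, Nat.le_of_dvd hq hNq⟩

lemma dvdLimsup_iUnion_subset [Finite ι] (s : ι → ℕ → Set X) :
    dvdLimsup (fun q ↦ ⋃ k, s k q) ⊆ ⋃ k, dvdLimsup (s k) := by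
  have := Fintype.ofFinite ι
  intro x hx
  by_contra hcon
  have hmiss : ∀ k, ∃ d > 0, ∀ q > 0, d ∣ q → x ∉ s k q := fun k ↦ by
    have hxk : x ∉ dvdLimsup (s k) := fun hk ↦ hcon (mem_iUnion_of_mem k hk)
    simpa only [dvdLimsup, mem_ofPred_eq, not_forall, not_exists, not_and, exists_prop] using hxk
  choose d hd hmiss using hmiss
  obtain ⟨q, hq, hdq, hxq⟩ := hx (∏ k, d k) (Finset.prod_pos fun k _ ↦ hd k)
  obtain ⟨k, hk⟩ := mem_iUnion.1 hxq
  exact hmiss k q hq ((Finset.dvd_prod_of_mem d (Finset.mem_univ k)).trans hdq) hk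

lemma dvdLimsup_eq_iInter_factorial (s : ℕ → Set X) :
    dvdLimsup s = ⋂ n : ℕ, ⋃ q > 0, s (n ! * q) := by
  ext x
  simp only [dvdLimsup, mem_ofPred_eq, mem_iInter, mem_iUnion, exists_prop]
  refine ⟨fun h n ↦ ?_, fun h d hd ↦ ?_⟩
  · obtain ⟨_, hq, ⟨c, rfl⟩, hx⟩ := h n ! n.factorial_pos
    exact ⟨c, pos_of_mul_pos_right hq (Nat.zero_le _), hx⟩
  · obtain ⟨q, hq, hx⟩ := h d
    exact ⟨d ! * q, by positivity, (Nat.dvd_factorial hd le_rfl).mul_right q, hx⟩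

lemma antitone_iUnion_factorial_mul (s : ℕ → Set X) :
    Antitone fun n : ℕ ↦ ⋃ q > 0, s (n ! * q) := by
  intro m n hmn
  obtain ⟨c, hc⟩ := Nat.factorial_dvd_factorial hmn
  refine iUnion₂_subset fun q hq ↦ ?_
  have hcq : 0 < c * q := Nat.mul_pos (Nat.pos_of_mul_pos_left (hc ▸ n.factorial_pos)) hq
  rw [hc, mul_assoc]
  exact subset_biUnion_of_mem (u := fun q ↦ s (m ! * q)) hcq

variable [MeasurableSpace X]

lemma measurableSet_dvdLimsup (hs : ∀ q, MeasurableSet (s q)) : MeasurableSet (dvdLimsup s) := by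
  rw [dvdLimsup_eq_iInter_factorial]
  exact .iInter fun _ ↦ .iUnion fun _ ↦ .iUnion fun _ ↦ hs _

lemma le_measure_dvdLimsup {μ : Measure X} [IsFiniteMeasure μ] {c : ℝ≥0∞}
    (hs : ∀ q, MeasurableSet (s q)) (h : ∀ d > 0, c ≤ μ (⋃ q > 0, s (d * q))) :
    c ≤ μ (dvdLimsup s) := by
  have hmeas : ∀ n : ℕ, NullMeasurableSet (⋃ q > 0, s (n ! * q)) μ := fun n ↦
    (MeasurableSet.iUnion fun _ ↦ .iUnion fun _ ↦ hs _).nullMeasurableSet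
  rw [dvdLimsup_eq_iInter_factorial, (antitone_iUnion_factorial_mul s).measure_iInter hmeas
    ⟨0, measure_ne_top μ _⟩]
  exact le_iInf fun n ↦ h _ n.factorial_pos

end DvdLimsup

section ZeroOne

lemma vadd_dvdLimsup_preimage_nsmul {G : Type*} [AddCommGroup G] {u : G} (hu : IsOfFinAddOrder u)
    (B : ℕ → Set G) :
    u +ᵥ dvdLimsup (fun q ↦ (q • ·) ⁻¹' B q) = dvdLimsup fun q ↦ (q • ·) ⁻¹' B q := by
  have add_mem : ∀ {w x : G}, IsOfFinAddOrder w → x ∈ dvdLimsup (fun q ↦ (q • ·) ⁻¹' B q) →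
      w + x ∈ dvdLimsup fun q ↦ (q • ·) ⁻¹' B q := by
    intro w x hw hx d hd
    obtain ⟨q, hq, hdq, hxq⟩ := hx (d * addOrderOf w) (Nat.mul_pos hd hw.addOrderOf_pos)
    refine ⟨q, hq, dvd_of_mul_right_dvd hdq, ?_⟩
    have hqw : q • w = 0 := addOrderOf_dvd_iff_nsmul_eq_zero.1 (dvd_of_mul_left_dvd hdq)
    simpa only [mem_preimage, nsmul_add, hqw, zero_add] using hxq
  refine Subset.antisymm ?_ fun x hx ↦ ?_
  · rintro _ ⟨x, hx, rfl⟩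
    exact add_mem hu hx
  · exact mem_vadd_set_iff_neg_vadd_mem.2 (add_mem hu.neg hx)

theorem dvdLimsup_preimage_nsmul_ae_empty_or_univ {T : ℝ} [Fact (0 < T)]
    {B : ℕ → Set (AddCircle T)} (hB : ∀ q, MeasurableSet (B q)) :
    dvdLimsup (fun q ↦ (q • ·) ⁻¹' B q) =ᵐ[volume] (∅ : Set (AddCircle T)) ∨
      dvdLimsup (fun q ↦ (q • ·) ⁻¹' B q) =ᵐ[volume] (univ : Set (AddCircle T)) := by
  have hmeas : MeasurableSet (dvdLimsup fun q ↦ (q • · : AddCircle T → AddCircle T) ⁻¹' B q) :=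
    measurableSet_dvdLimsup fun q ↦ (continuous_nsmul q).measurable (hB q)
  have horder : ∀ n : ℕ, addOrderOf ((T / (n + 1 : ℕ) : ℝ) : AddCircle T) = n + 1 := fun n ↦
    AddCircle.addOrderOf_period_div n.succ_pos
  refine AddCircle.ae_empty_or_univ_of_forall_vadd_ae_eq_self (l := atTop)
    (u := fun n : ℕ ↦ ((T / (n + 1 : ℕ) : ℝ) : AddCircle T)) hmeas.nullMeasurableSet
    (fun n ↦ ?_) ?_
  · have hfin := addOrderOf_pos_iff.1 (n.succ_pos.trans_eq (horder n).symm)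
    exact (vadd_dvdLimsup_preimage_nsmul hfin B).eventuallyEq
  · exact (tendsto_add_atTop_nat 1).congr fun n ↦ (horder n).symm

end ZeroOne

section UnitAddCircle

lemma volume_Icc_inter_preimage_coe {S : Set UnitAddCircle} (hS : MeasurableSet S) :
    volume (Icc 0 1 ∩ ((↑) : ℝ → UnitAddCircle) ⁻¹' S) = volume S := by
  have hpres := UnitAddCircle.measurePreserving_mk 0
  rw [← hpres.measure_preimage hS.nullMeasurableSet, zero_add, restrict_Ioc_eq_restrict_Icc,
    Measure.restrict_apply (hpres.measurable hS), inter_comm]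

lemma measurePreserving_nsmul_unitAddCircle {d : ℕ} (hd : 0 < d) :
    MeasurePreserving (d • · : UnitAddCircle → UnitAddCircle) := by
  simpa only [natCast_zsmul] using
    Measure.measurePreserving_zsmul (volume : Measure UnitAddCircle) (Int.natCast_ne_zero.2 hd.ne')

lemma volume_setOf_norm_nsmul_le {d : ℕ} (hd : 0 < d) (ε : ℝ) :
    volume {x : UnitAddCircle | ‖d • x‖ ≤ ε} ≤ ENNReal.ofReal (2 * ε) := by
  calc volume {x : UnitAddCircle | ‖d • x‖ ≤ ε}
      = volume ((d • · : UnitAddCircle → UnitAddCircle) ⁻¹' Metric.closedBall 0 ε) := by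
        simp only [preimage, mem_closedBall_zero_iff]
    _ = volume (Metric.closedBall (0 : UnitAddCircle) ε) :=
        (measurePreserving_nsmul_unitAddCircle hd).measure_preimage
          Metric.isClosed_closedBall.nullMeasurableSet
    _ ≤ ENNReal.ofReal (2 * ε) := by
        rw [AddCircle.volume_closedBall]
        exact ENNReal.ofReal_le_ofReal (min_le_right _ _)

lemma volume_setOf_norm_nsmul_coe_le {d : ℕ} (hd : 0 < d) (ε : ℝ) :
    volume {α ∈ Icc (0 : ℝ) 1 | ‖d • (α : UnitAddCircle)‖ ≤ ε} ≤ ENNReal.ofReal (2 * ε) := by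
  have hmeas : MeasurableSet {x : UnitAddCircle | ‖d • x‖ ≤ ε} :=
    (isClosed_le (by fun_prop) continuous_const).measurableSet
  exact (volume_Icc_inter_preimage_coe hmeas).trans_le (volume_setOf_norm_nsmul_le hd ε)

end UnitAddCircle

section Measure

lemma summable_of_summable_min {ι : Type*} {f : ι → ℝ} {c : ℝ} (hc : 0 < c)
    (h : Summable fun i ↦ min (f i) c) : Summable f := by
  refine (summable_congr_cofinite ?_).1 h
  filter_upwards [h.tendsto_cofinite_zero.eventually_lt_const hc] with i hi
  exact min_eq_left ((min_lt_iff.1 hi).resolve_right (lt_irrefl c)).le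

lemma card_mul_le_measureReal {α ι : Type*} [MeasurableSpace α] {μ : Measure α} {K : Finset ι}
    {s : ι → Set α} {U : Set α} {m : ℝ} (hs : ∀ j ∈ K, MeasurableSet (s j))
    (hdisj : (K : Set ι).PairwiseDisjoint s) (hsU : ∀ j ∈ K, s j ⊆ U) (hU : μ U ≠ ∞)
    (hm : ∀ j ∈ K, μ.real (s j) = m) : K.card * m ≤ μ.real U := by
  calc K.card * m = ∑ j ∈ K, μ.real (s j) := by rw [Finset.sum_congr rfl hm]; simp
    _ = μ.real (⋃ j ∈ K, s j) := (measureReal_biUnion_finset hdisj hs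
        fun j hj ↦ measure_ne_top_of_subset (hsU j hj) hU).symm
    _ ≤ μ.real U := measureReal_mono (iUnion₂_subset hsU) hU

lemma sub_le_measureReal_iUnion {X : Type*} [MeasurableSpace X] {μ : Measure X} {A : ℕ → Set X}
    {v : ℕ → ℝ} {c δ : ℝ} (hA : ∀ n, MeasurableSet (A n)) (hfin : μ (⋃ n, A n) ≠ ∞)
    (hv : ∀ n, 0 ≤ v n) (hdiv : ¬ Summable v) (hlow : ∀ n, c * v n ≤ μ.real (A n))
    (hover : ∀ n, μ.real (A n ∩ ⋃ k < n, A k) ≤ v n * (μ.real (⋃ k < n, A k) + δ)) :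
    c - δ ≤ μ.real (⋃ n, A n) := by
  -- A smaller union would gain, at each `n`, the fixed proportion `c - δ - μ.real (⋃ n, A n)`
  -- of `v n`.
  by_contra! hlt
  have hsub : ∀ n, ⋃ k < n, A k ⊆ ⋃ n, A n := fun n ↦ iUnion₂_subset fun k _ ↦ subset_iUnion A k
  have hfin' : ∀ n, μ (⋃ k < n, A k) ≠ ∞ := fun n ↦ measure_ne_top_of_subset (hsub n) hfin
  have hle : ∀ n, μ.real (⋃ k < n, A k) ≤ μ.real (⋃ n, A n) := fun n ↦
    measureReal_mono (hsub n) hfin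
  have hgain : ∀ n, (c - δ - μ.real (⋃ n, A n)) * v n + μ.real (⋃ k < n, A k) ≤
      μ.real (⋃ k < n + 1, A k) := by
    intro n
    have hunion := measureReal_union_add_inter (μ := μ) (s := ⋃ k < n, A k) (hA n) (hfin' n)
      (measure_ne_top_of_subset (subset_iUnion A n) hfin)
    rw [← biUnion_lt_succ, inter_comm] at hunion
    nlinarith [hlow n, hover n, mul_le_mul_of_nonneg_left (hle n) (hv n)]
  have hsum : ∀ n, (c - δ - μ.real (⋃ n, A n)) * ∑ k ∈ Finset.range n, v k ≤
      μ.real (⋃ k < n, A k) := by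
    intro n
    induction n with
    | zero => simp
    | succ n ih =>
      rw [Finset.sum_range_succ, mul_add]
      linarith [hgain n]
  refine hdiv (summable_of_sum_range_le (c := μ.real (⋃ n, A n) / (c - δ - μ.real (⋃ n, A n))) hv
    fun n ↦ ?_)
  rw [le_div_iff₀' (sub_pos.2 hlt)]
  exact (hsum n).trans (hle n)

end Measure

section Frontier

variable {X : Type*} [TopologicalSpace X]

lemma frontier_biUnion_finset_subset {ι : Type*} (J : Finset ι) (s : ι → Set X) :
    frontier (⋃ j ∈ J, s j) ⊆ ⋃ j ∈ J, frontier (s j) := by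
  rintro x ⟨hcl, hint⟩
  rw [J.closure_biUnion] at hcl
  obtain ⟨j, hj, hx⟩ := mem_iUnion₂.1 hcl
  exact mem_iUnion₂.2
    ⟨j, hj, hx, fun h ↦ hint (interior_mono (subset_biUnion_of_mem (u := s) hj) h)⟩

lemma subset_of_isPreconnected_of_disjoint_frontier {s u : Set X} (hs : IsPreconnected s)
    (hu : IsOpen u) (hsu : (s ∩ u).Nonempty) (hdisj : Disjoint s (frontier u)) : s ⊆ u := by
  refine hs.subset_left_of_subset_union hu isClosed_closure.isOpen_compl
    (disjoint_compl_right_iff_subset.2 subset_closure) (fun x hx ↦ ?_) hsu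
  by_cases hxu : x ∈ u
  · exact .inl hxu
  · exact .inr fun hcl ↦ disjoint_left.1 hdisj hx (hu.frontier_eq ▸ ⟨hcl, hxu⟩)

lemma frontier_Ioo_subset (a b : ℝ) : frontier (Ioo a b) ⊆ {a, b} := by
  obtain hab | hab := lt_or_ge a b
  · exact (frontier_Ioo hab).subset
  · simp only [Ioo_eq_empty_of_le hab, frontier_empty, empty_subset]

end Frontier

section Cell

variable {M : ℕ} {j : ℤ} {x : ℝ}

/-- The `j`-th cell of the partition of the line into half-open intervals of length `1 / M`. -/
def cell (M : ℕ) (j : ℤ) : Set ℝ := Ico (j / M : ℝ) ((j + 1) / M)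

lemma mem_cell_iff (hM : 0 < M) : x ∈ cell M j ↔ ⌊x * M⌋ = j := by
  have hM' : (0 : ℝ) < M := Nat.cast_pos.2 hM
  rw [Int.floor_eq_iff, cell, mem_Ico, div_le_iff₀ hM', lt_div_iff₀ hM']

lemma pairwise_disjoint_cell (hM : 0 < M) : Pairwise (Function.onFun Disjoint (cell M)) :=
  fun _ _ hij ↦ disjoint_left.2 fun _ hi hj ↦
    hij (((mem_cell_iff hM).1 hi).symm.trans ((mem_cell_iff hM).1 hj))

lemma volume_real_cell (M : ℕ) (j : ℤ) : volume.real (cell M j) = 1 / M := by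
  have hlen : ((j + 1) / M - j / M : ℝ) = 1 / M := by ring
  rw [cell, Real.volume_real_Ico, hlen, max_eq_left (by positivity)]

theorem card_le_of_cell_inter_nonempty {U : Set ℝ} {E : Finset ℝ} {K : Finset ℤ} (hM : 0 < M)
    (hU : IsOpen U) (hfin : volume U ≠ ∞) (hE : frontier U ⊆ E)
    (hK : ∀ j ∈ K, (cell M j ∩ U).Nonempty) : (K.card : ℝ) ≤ M * volume.real U + E.card := by
  classical
  have hM' : (0 : ℝ) < M := Nat.cast_pos.2 hM
  have hinside : ((K.filter fun j ↦ cell M j ⊆ U).card : ℝ) ≤ M * volume.real U := by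
    rw [← div_le_iff₀' hM', div_eq_mul_one_div]
    exact card_mul_le_measureReal (fun _ _ ↦ measurableSet_Ico)
      ((pairwise_disjoint_cell hM).set_pairwise _) (fun j hj ↦ (Finset.mem_filter.1 hj).2) hfin
      fun j _ ↦ volume_real_cell M j
  have hcross : K.filter (fun j ↦ ¬ cell M j ⊆ U) ⊆ E.image fun x : ℝ ↦ ⌊x * M⌋ := by
    intro j hj
    obtain ⟨hjK, hjU⟩ := Finset.mem_filter.1 hj
    have hmeet : ¬ Disjoint (cell M j) (frontier U) := fun hdisj ↦
      hjU (subset_of_isPreconnected_of_disjoint_frontier isPreconnected_Ico hU (hK j hjK) hdisj)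
    obtain ⟨x, hxj, hxU⟩ := not_disjoint_iff.1 hmeet
    exact Finset.mem_image.2 ⟨x, hE hxU, (mem_cell_iff hM).1 hxj⟩
  have hcross_card := (Finset.card_le_card hcross).trans Finset.card_image_le
  rw [← K.card_filter_add_card_filter_not fun j ↦ cell M j ⊆ U]
  push_cast
  exact add_le_add hinside (by exact_mod_cast hcross_card)

end Cell

section IntervalUnion

variable {M : ℕ} {J : Finset ℤ} {y : ℤ → ℝ} {r : ℝ}

/-- The union of the open intervals of common length `r` with left endpoints `y j`, `j ∈ J`. In the
applications each of these intervals lies in the cell of its index. -/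
def intervalUnion (J : Finset ℤ) (y : ℤ → ℝ) (r : ℝ) : Set ℝ := ⋃ j ∈ J, Ioo (y j) (y j + r)

lemma isOpen_intervalUnion (J : Finset ℤ) (y : ℤ → ℝ) (r : ℝ) : IsOpen (intervalUnion J y r) :=
  isOpen_biUnion fun _ _ ↦ isOpen_Ioo

lemma volume_intervalUnion_ne_top (J : Finset ℤ) (y : ℤ → ℝ) (r : ℝ) :
    volume (intervalUnion J y r) ≠ ∞ :=
  (measure_biUnion_lt_top J.finite_toSet fun _ _ ↦ measure_Ioo_lt_top).ne

lemma volume_real_intervalUnion_le (J : Finset ℤ) (y : ℤ → ℝ) (hr : 0 ≤ r) :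
    volume.real (intervalUnion J y r) ≤ J.card * r := by
  refine (measureReal_biUnion_finset_le _ _).trans_eq ?_
  simp [hr]

lemma volume_real_intervalUnion (hM : 0 < M) (hr : 0 ≤ r)
    (hy : ∀ j ∈ J, Ioo (y j) (y j + r) ⊆ cell M j) :
    volume.real (intervalUnion J y r) = J.card * r := by
  have hdisj : (J : Set ℤ).PairwiseDisjoint fun j ↦ Ioo (y j) (y j + r) := fun i hi j hj hij ↦
    (pairwise_disjoint_cell hM hij).mono (hy i hi) (hy j hj)
  rw [intervalUnion, measureReal_biUnion_finset hdisj (fun _ _ ↦ measurableSet_Ioo)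
    fun _ _ ↦ measure_Ioo_lt_top.ne]
  simp [hr]

lemma exists_finset_frontier_intervalUnion_subset (J : Finset ℤ) (y : ℤ → ℝ) (r : ℝ) :
    ∃ E : Finset ℝ, E.card ≤ 2 * J.card ∧ frontier (intervalUnion J y r) ⊆ E := by
  classical
  refine ⟨J.biUnion fun j ↦ {y j, y j + r}, ?_, ?_⟩
  · rw [mul_comm]
    exact Finset.card_biUnion_le_card_mul _ _ _ fun _ _ ↦ Finset.card_le_two
  · refine (frontier_biUnion_finset_subset J _).trans ?_
    rw [Finset.coe_biUnion]
    refine iUnion₂_mono fun j _ ↦ ?_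
    rw [Finset.coe_pair]
    exact frontier_Ioo_subset _ _

theorem volume_real_intervalUnion_inter_le {U : Set ℝ} {E : Finset ℝ} (hM : 0 < M) (hr : 0 ≤ r)
    (hy : ∀ j ∈ J, Ioo (y j) (y j + r) ⊆ cell M j) (hU : IsOpen U) (hfin : volume U ≠ ∞)
    (hE : frontier U ⊆ E) :
    volume.real (intervalUnion J y r ∩ U) ≤ M * r * (volume.real U + E.card / M) := by
  classical
  set K := J.filter fun j ↦ (cell M j ∩ U).Nonempty
  have hsub : intervalUnion J y r ∩ U ⊆ intervalUnion K y r := by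
    rintro x ⟨hx, hxU⟩
    obtain ⟨j, hj, hxj⟩ := mem_iUnion₂.1 hx
    exact mem_iUnion₂.2 ⟨j, Finset.mem_filter.2 ⟨hj, x, hy j hj hxj, hxU⟩, hxj⟩
  have hcard : (K.card : ℝ) ≤ M * volume.real U + E.card :=
    card_le_of_cell_inter_nonempty hM hU hfin hE fun j hj ↦ (Finset.mem_filter.1 hj).2
  calc volume.real (intervalUnion J y r ∩ U)
      ≤ volume.real (intervalUnion K y r) :=
        measureReal_mono hsub (volume_intervalUnion_ne_top K y r)
    _ ≤ K.card * r := volume_real_intervalUnion_le K y hr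
    _ ≤ (M * volume.real U + E.card) * r := mul_le_mul_of_nonneg_right hcard hr
    _ = M * r * (volume.real U + E.card / M) := by field_simp

theorem sub_le_volume_real_iUnion_intervalUnion {M : ℕ → ℕ} {J : ℕ → Finset ℤ} {y : ℕ → ℤ → ℝ}
    {r : ℕ → ℝ} {c δ : ℝ} (hM : ∀ n, 0 < M n) (hr : ∀ n, 0 ≤ r n)
    (hy : ∀ n, ∀ j ∈ J n, Ioo (y n j) (y n j + r n) ⊆ cell (M n) j)
    (hlow : ∀ n, c * M n ≤ (J n).card)
    (hsum : ∀ n, (∑ k ∈ Finset.range n, 2 * (J k).card : ℕ) ≤ δ * M n)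
    (hfin : volume (⋃ n, intervalUnion (J n) (y n) (r n)) ≠ ∞)
    (hdiv : ¬ Summable fun n ↦ M n * r n) :
    c - δ ≤ volume.real (⋃ n, intervalUnion (J n) (y n) (r n)) := by
  classical
  refine sub_le_measureReal_iUnion (fun n ↦ (isOpen_intervalUnion _ _ _).measurableSet) hfin
    (fun n ↦ mul_nonneg (Nat.cast_nonneg _) (hr n)) hdiv (fun n ↦ ?_) fun n ↦ ?_
  · rw [volume_real_intervalUnion (hM n) (hr n) (hy n), ← mul_assoc]
    exact mul_le_mul_of_nonneg_right (hlow n) (hr n)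
  choose E hEcard hE using fun k ↦ exists_finset_frontier_intervalUnion_subset (J k) (y k) (r k)
  have hopen : IsOpen (⋃ k < n, intervalUnion (J k) (y k) (r k)) :=
    isOpen_biUnion fun _ _ ↦ isOpen_intervalUnion _ _ _
  have hfrontier : frontier (⋃ k < n, intervalUnion (J k) (y k) (r k)) ⊆
      ((Finset.range n).biUnion E : Finset ℝ) := by
    simp only [← Finset.mem_range]
    refine (frontier_biUnion_finset_subset _ _).trans ?_
    rw [Finset.coe_biUnion]
    exact iUnion₂_mono fun k _ ↦ hE k
  have hcard : (((Finset.range n).biUnion E).card : ℝ) ≤ δ * M n :=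
    (Nat.cast_le.2 (Finset.card_biUnion_le.trans (Finset.sum_le_sum fun k _ ↦ hEcard k))).trans
      (hsum n)
  refine (volume_real_intervalUnion_inter_le (hM n) (hr n) (hy n) hopen
    (measure_ne_top_of_subset (iUnion₂_subset fun k _ ↦
      subset_iUnion (fun n ↦ intervalUnion (J n) (y n) (r n)) k) hfin) hfrontier).trans ?_
  have hM' : (0 : ℝ) < M n := Nat.cast_pos.2 (hM n)
  exact mul_le_mul_of_nonneg_left (add_le_add_right ((div_le_iff₀ hM').2 hcard) _)
    (mul_nonneg hM'.le (hr n))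

end IntervalUnion

section ShiftedRationals

variable {γ α : ℝ} {Q R : ℕ}

/-- The solutions `p` of the congruences `q p ≡ γ` modulo `1` with `q` in the dyadic block
`[Q, 2Q]`. -/
def shiftedRationals (γ : ℝ) (Q : ℕ) : Set ℝ :=
  {p | ∃ (q : ℕ) (a : ℤ), Q ≤ q ∧ q ≤ 2 * Q ∧ p = (a + γ) / q}

lemma exists_abs_mul_ratCast_sub_sub_le (p : ℚ) (γ : ℝ) (Q : ℕ) :
    ∃ (q : ℕ) (a : ℤ), Q ≤ q ∧ q < Q + p.den ∧ |q * (p : ℝ) - γ - a| ≤ 1 / (2 * p.den) := by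
  have hden : (0 : ℝ) < p.den := Nat.cast_pos.2 p.pos
  -- With `m / p.den` closest to `γ` and `u` inverse to `p.num` modulo `p.den`, we want
  -- `q ≡ m * u` modulo `p.den`, so that `q * p ≡ m / p.den` modulo `1`.
  set m : ℤ := round (γ * p.den)
  obtain ⟨u, w, huw⟩ : IsCoprime p.num p.den := Int.isCoprime_iff_gcd_eq_one.2 p.reduced
  obtain ⟨z, hz0, hz1, hz⟩ := Int.existsUnique_equiv (m * u - Q) (Int.natCast_pos.2 p.pos)
  lift z to ℕ using hz0
  obtain ⟨t, ht⟩ := hz.dvd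
  refine ⟨Q + z, -m * w - t * p.num, Nat.le_add_right Q z, by omega, ?_⟩
  have ht' : (m * u - Q - z : ℝ) = p.den * t := by exact_mod_cast ht
  have huw' : (u * p.num + w * p.den : ℝ) = 1 := by exact_mod_cast huw
  have hresidual : ((Q + z : ℕ) : ℝ) * (p : ℝ) - γ - (-m * w - t * p.num : ℤ) =
      (m - γ * p.den) / p.den := by
    rw [Rat.cast_def]
    push_cast
    field_simp
    linear_combination (-p.num : ℝ) * ht' + (m : ℝ) * huw'
  rw [hresidual, abs_div, abs_of_pos hden, abs_sub_comm, ← div_div]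
  gcongr
  exact abs_sub_round _

lemma norm_den_nsmul_coe_le (α : ℝ) (p : ℚ) : ‖p.den • (α : UnitAddCircle)‖ ≤ p.den * |α - p| := by
  have hp : (0 : ℝ) < p.den := Nat.cast_pos.2 p.pos
  calc ‖p.den • (α : UnitAddCircle)‖ ≤ |p.den * α - p.num| := by
        rw [← AddCircle.coe_nsmul, UnitAddCircle.norm_eq, nsmul_eq_mul]
        exact round_le _ _
    _ = p.den * |α - p| := by
        rw [← abs_of_pos hp, ← abs_mul, abs_of_pos hp, Rat.cast_def]
        field_simp

lemma exists_mem_shiftedRationals_abs_sub_le (γ : ℝ) (hQ : 0 < Q) (hR : 0 < R)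
    (hα : ∀ s : ℕ, 0 < s → s < R → 1 / (Q + 1 : ℝ) < ‖s • (α : UnitAddCircle)‖) :
    ∃ p ∈ shiftedRationals γ Q, |α - p| ≤ 3 / (2 * R * Q) := by
  obtain ⟨p, hαp, hden⟩ := Real.exists_rat_abs_sub_le_and_den_le α hQ
  have hRden : R ≤ p.den := by
    by_contra! hlt
    refine (hα p.den p.pos hlt).not_ge ?_
    calc ‖p.den • (α : UnitAddCircle)‖ ≤ p.den * |α - p| := norm_den_nsmul_coe_le α p
      _ ≤ p.den * (1 / ((Q + 1) * p.den)) := by gcongr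
      _ = 1 / (Q + 1) := by field_simp
  obtain ⟨q, a, hQq, hqden, hqa⟩ := exists_abs_mul_ratCast_sub_sub_le p γ Q
  have hq : (0 : ℝ) < q := Nat.cast_pos.2 (hQ.trans_le hQq)
  refine ⟨(a + γ) / q, ⟨q, a, hQq, by omega, rfl⟩, ?_⟩
  have hpa : |(p : ℝ) - (a + γ) / q| ≤ 1 / (2 * R * Q) := by
    calc |(p : ℝ) - (a + γ) / q| = |q * (p : ℝ) - γ - a| / q := by
          rw [← abs_of_pos hq, ← abs_div, abs_of_pos hq]
          congr 1
          field_simp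
          ring
      _ ≤ 1 / (2 * p.den) / q := by gcongr
      _ = 1 / (2 * p.den * q) := div_div _ _ _
      _ ≤ 1 / (2 * R * Q) := by gcongr
  calc |α - (a + γ) / q| ≤ |α - p| + |(p : ℝ) - (a + γ) / q| := abs_sub_le _ _ _
    _ ≤ 1 / ((Q + 1) * p.den) + 1 / (2 * R * Q) := add_le_add hαp hpa
    _ ≤ 1 / (Q * R) + 1 / (2 * R * Q) := by gcongr; linarith
    _ = 3 / (2 * R * Q) := by field_simp; norm_num

theorem volume_setOf_far_from_shiftedRationals_le (γ : ℝ) (hQ : 0 < Q) (hR : 0 < R) :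
    volume {α ∈ Icc (0 : ℝ) 1 | ∀ p ∈ shiftedRationals γ Q, 3 / (2 * R * Q) < |α - p|} ≤
      ENNReal.ofReal (2 * R / Q) := by
  have hsub : {α ∈ Icc (0 : ℝ) 1 | ∀ p ∈ shiftedRationals γ Q, 3 / (2 * R * Q) < |α - p|} ⊆
      ⋃ s ∈ Finset.Ico 1 R, {α ∈ Icc (0 : ℝ) 1 | ‖s • (α : UnitAddCircle)‖ ≤ 1 / (Q + 1)} := by
    rintro α ⟨hα, hfar⟩
    by_contra hcon
    simp only [mem_iUnion, Finset.mem_Ico, exists_prop, not_exists, not_and, mem_ofPred_eq,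
      not_le] at hcon
    obtain ⟨p, hp, hαp⟩ := exists_mem_shiftedRationals_abs_sub_le γ hQ hR
      fun s hs hsR ↦ hcon s ⟨hs, hsR⟩ hα
    exact (hfar p hp).not_ge hαp
  calc _ ≤ ∑ s ∈ Finset.Ico 1 R,
        volume {α ∈ Icc (0 : ℝ) 1 | ‖s • (α : UnitAddCircle)‖ ≤ 1 / (Q + 1)} :=
        (measure_mono hsub).trans (measure_biUnion_finset_le _ _)
    _ ≤ ∑ _s ∈ Finset.Ico 1 R, ENNReal.ofReal (2 * (1 / (Q + 1))) :=
        Finset.sum_le_sum fun s hs ↦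
          volume_setOf_norm_nsmul_coe_le (Finset.mem_Ico.1 hs).1 _
    _ = ENNReal.ofReal ((R - 1 : ℕ) * (2 * (1 / (Q + 1)))) := by
        rw [Finset.sum_const, Nat.card_Ico, nsmul_eq_mul, ENNReal.ofReal_mul (Nat.cast_nonneg _),
          ENNReal.ofReal_natCast]
    _ ≤ ENNReal.ofReal (2 * R / Q) := by
        refine ENNReal.ofReal_le_ofReal ?_
        have hRR : ((R - 1 : ℕ) : ℝ) ≤ R := Nat.cast_le.2 (Nat.sub_le R 1)
        calc ((R - 1 : ℕ) : ℝ) * (2 * (1 / (Q + 1))) ≤ R * (2 * (1 / Q)) := by gcongr; linarith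
          _ = 2 * R / Q := by ring

end ShiftedRationals

section Level

lemma cell_subset_Ico {M : ℕ} {j : ℤ} (hj : j ∈ Finset.Ico (0 : ℤ) M) :
    cell M j ⊆ Ico (0 : ℝ) 1 := by
  obtain ⟨hj0, hjM⟩ := Finset.mem_Ico.1 hj
  have hj0' : (0 : ℝ) ≤ j := Int.cast_nonneg hj0
  have hjM' : (j + 1 : ℝ) ≤ M := by exact_mod_cast hjM
  exact Ico_subset_Ico (div_nonneg hj0' M.cast_nonneg) (div_le_one_of_le₀ hjM' M.cast_nonneg)

lemma volume_biUnion_Icc_le (J : Finset ℤ) (M : ℕ) (κ : ℝ) :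
    volume (⋃ j ∈ J, Icc (j / M - κ / M : ℝ) ((j + 1) / M + κ / M)) ≤
      ENNReal.ofReal (J.card * (2 * κ + 1) / M) := by
  have hlen : ∀ j : ℤ, ((j + 1) / M + κ / M - (j / M - κ / M) : ℝ) = (2 * κ + 1) / M :=
    fun j ↦ by ring
  refine (measure_biUnion_finset_le _ _).trans_eq ?_
  simp only [Real.volume_Icc, hlen, Finset.sum_const, nsmul_eq_mul, mul_div_assoc,
    ENNReal.ofReal_mul J.card.cast_nonneg, ENNReal.ofReal_natCast]

lemma exists_mem_cell_of_abs_sub_le {M : ℕ} {x p κ : ℝ} (hκM : κ < M / 4) (hM : 0 < M)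
    (hx : x ∈ Icc (1 / 4 : ℝ) (3 / 4)) (hxp : |x - p| ≤ κ / M) :
    ∃ j ∈ Finset.Ico (0 : ℤ) M, p ∈ cell M j ∧
      x ∈ Icc (j / M - κ / M : ℝ) ((j + 1) / M + κ / M) := by
  have hM' : (0 : ℝ) < M := Nat.cast_pos.2 hM
  have hκM' : κ / M < 1 / 4 := by rw [div_lt_iff₀ hM']; linarith
  obtain ⟨hlow, hupp⟩ := abs_le.1 hxp
  have hp0 : 0 ≤ p := by linarith [hx.1]
  have hp1 : p < 1 := by linarith [hx.2]
  have hpcell : p ∈ cell M ⌊p * M⌋ := (mem_cell_iff hM).2 rfl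
  refine ⟨⌊p * M⌋, Finset.mem_Ico.2 ⟨Int.floor_nonneg.2 (by positivity), Int.floor_lt.2 ?_⟩, hpcell,
    by linarith [hpcell.1], by linarith [hpcell.2]⟩
  exact mul_lt_of_lt_one_left hM' hp1

theorem exists_finset_cell_inter_nonempty {P : Set ℝ} {M : ℕ} {κ : ℝ} (hκ : 0 ≤ κ)
    (hκM : κ < M / 4)
    (hfar : volume {x ∈ Icc (0 : ℝ) 1 | ∀ p ∈ P, κ / M < |x - p|} ≤ ENNReal.ofReal (1 / 4)) :
    ∃ J ⊆ Finset.Ico (0 : ℤ) M, M / (4 * (2 * κ + 1)) ≤ J.card ∧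
      ∀ j ∈ J, (cell M j ∩ P).Nonempty := by
  classical
  have hM' : (0 : ℝ) < M := by linarith
  have hM : 0 < M := Nat.cast_pos.1 hM'
  set F : Set ℝ := {x ∈ Icc (0 : ℝ) 1 | ∀ p ∈ P, κ / M < |x - p|}
  set J := (Finset.Ico (0 : ℤ) M).filter fun j ↦ (cell M j ∩ P).Nonempty
  refine ⟨J, Finset.filter_subset _ _, ?_, fun j hj ↦ (Finset.mem_filter.1 hj).2⟩
  have hcover : Icc (1 / 4 : ℝ) (3 / 4) ⊆
      F ∪ ⋃ j ∈ J, Icc (j / M - κ / M : ℝ) ((j + 1) / M + κ / M) := by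
    intro x hx
    by_cases hxF : x ∈ F
    · exact .inl hxF
    obtain ⟨p, hp, hxp⟩ : ∃ p ∈ P, |x - p| ≤ κ / M := by
      by_contra! h
      exact hxF ⟨⟨by linarith [hx.1], by linarith [hx.2]⟩, h⟩
    obtain ⟨j, hj, hpj, hxj⟩ := exists_mem_cell_of_abs_sub_le hκM hM hx hxp
    exact .inr (mem_iUnion₂.2 ⟨j, Finset.mem_filter.2 ⟨hj, p, hpj, hp⟩, hxj⟩)
  have hvol : ENNReal.ofReal (1 / 2) ≤ ENNReal.ofReal (1 / 4 + J.card * (2 * κ + 1) / M) := by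
    calc ENNReal.ofReal (1 / 2) = volume (Icc (1 / 4 : ℝ) (3 / 4)) := by
          rw [Real.volume_Icc]; norm_num
      _ ≤ volume F + volume (⋃ j ∈ J, Icc (j / M - κ / M : ℝ) ((j + 1) / M + κ / M)) :=
          (measure_mono hcover).trans (measure_union_le _ _)
      _ ≤ ENNReal.ofReal (1 / 4) + ENNReal.ofReal (J.card * (2 * κ + 1) / M) :=
          add_le_add hfar (volume_biUnion_Icc_le J M κ)
      _ = _ := (ENNReal.ofReal_add (by norm_num) (by positivity)).symm
  rw [ENNReal.ofReal_le_ofReal_iff (by positivity)] at hvol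
  have hcount : 1 / 4 ≤ J.card * (2 * κ + 1) / M := by linarith
  rw [le_div_iff₀ hM'] at hcount
  rw [div_le_iff₀ (by positivity)]
  linarith

lemma exists_Ioo_subset_Ico_inter_ball {a b x r : ℝ} (hx : x ∈ Ico a b) (hr : 2 * r ≤ b - a) :
    ∃ y, Ioo y (y + r) ⊆ Ico a b ∩ Metric.ball x r := by
  obtain hxr | hxr := le_or_gt (x + r) b
  · refine ⟨x, fun z hz ↦ ⟨⟨hx.1.trans hz.1.le, hz.2.trans_le hxr⟩, ?_⟩⟩
    rw [Real.ball_eq_Ioo]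
    exact ⟨by linarith [hz.1, hz.2], hz.2⟩
  · refine ⟨x - r, fun z hz ↦ ⟨⟨by linarith [hz.1], by linarith [hz.2, hx.2]⟩, ?_⟩⟩
    rw [Real.ball_eq_Ioo]
    exact ⟨hz.1, by linarith [hz.1, hz.2]⟩

theorem exists_Ioo_subset_cell_inter_thickening (γ : ℝ) {Q : ℕ} {r : ℝ} (hQ : 0 < Q)
    (hdvd : 8 ∣ Q) (hr : r ≤ 1 / (2 * Q ^ 2)) :
    ∃ J ⊆ Finset.Ico (0 : ℤ) (Q ^ 2 : ℕ), ∃ y : ℤ → ℝ, ((Q ^ 2 : ℕ) / 100 : ℝ) ≤ J.card ∧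
      ∀ j ∈ J, Ioo (y j) (y j + r) ⊆
        cell (Q ^ 2) j ∩ Metric.thickening r (shiftedRationals γ Q) := by
  obtain ⟨R, rfl⟩ := hdvd
  have hR : 0 < R := Nat.pos_of_mul_pos_left hQ
  have hR' : (1 : ℝ) ≤ R := Nat.one_le_cast.2 hR
  have hfar := volume_setOf_far_from_shiftedRationals_le γ hQ hR
  have hκ : (3 / (2 * R * (8 * R : ℕ)) : ℝ) = 12 / ((8 * R) ^ 2 : ℕ) := by
    push_cast; field_simp; norm_num
  have hquarter : (2 * R / (8 * R : ℕ) : ℝ) = 1 / 4 := by push_cast; field_simp; norm_num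
  rw [hκ, hquarter] at hfar
  obtain ⟨J, hJ, hcard, hmeet⟩ := exists_finset_cell_inter_nonempty (by norm_num)
    (by push_cast; nlinarith) hfar
  have hinterval : ∀ j, ∃ y, j ∈ J → Ioo y (y + r) ⊆
      cell ((8 * R) ^ 2) j ∩ Metric.thickening r (shiftedRationals γ (8 * R)) := by
    intro j
    by_cases hj : j ∈ J
    · obtain ⟨p, hpj, hp⟩ := hmeet j hj
      obtain ⟨y, hy⟩ := exists_Ioo_subset_Ico_inter_ball (r := r) hpj (by
        rw [← sub_div, add_sub_cancel_left]
        push_cast at hr ⊢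
        calc 2 * r ≤ 2 * (1 / (2 * (8 * R) ^ 2)) := by gcongr
          _ = 1 / (8 * R) ^ 2 := by field_simp)
      exact ⟨y, fun _ ↦ hy.trans (inter_subset_inter_right _ (Metric.ball_subset_thickening hp r))⟩
    · exact ⟨0, fun h ↦ absurd h hj⟩
  choose y hy using hinterval
  refine ⟨J, hJ, y, ?_, hy⟩
  convert hcard using 2
  norm_num

end Level

section ApproxSet

variable {ψ : ℕ → ℝ} {γ : ℝ}

/-- The points `x` of the circle with `‖q x - γ‖ < ψ q`; inhomogeneous approximation to `γ` at
denominator `q`. -/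
def approxSet (γ : UnitAddCircle) (ψ : ℕ → ℝ) (q : ℕ) : Set UnitAddCircle :=
  (q • ·) ⁻¹' Metric.ball γ (ψ q)

lemma isOpen_approxSet (γ : UnitAddCircle) (ψ : ℕ → ℝ) (q : ℕ) : IsOpen (approxSet γ ψ q) :=
  Metric.isOpen_ball.preimage (continuous_nsmul q)

lemma isOpen_iUnion_approxSet (γ : UnitAddCircle) (ψ : ℕ → ℝ) :
    IsOpen (⋃ q > 0, approxSet γ ψ q) :=
  isOpen_iUnion fun q ↦ isOpen_iUnion fun _ ↦ isOpen_approxSet γ ψ q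

lemma coe_mem_approxSet_iff {α : ℝ} {q : ℕ} :
    (α : UnitAddCircle) ∈ approxSet γ ψ q ↔ distNearestInt (q * α - γ) < ψ q := by
  rw [approxSet, mem_preimage, mem_ball_iff_norm, ← AddCircle.coe_nsmul, ← AddCircle.coe_sub,
    UnitAddCircle.norm_eq, nsmul_eq_mul, distNearestInt]

lemma coe_mem_iUnion_approxSet {Q : ℕ} {r α : ℝ} (hQ : 0 < Q)
    (hψ : ∀ q r : ℕ, 1 ≤ q → q ≤ r → ψ r ≤ ψ q) (hr : r ≤ ψ (2 * Q) / (2 * Q))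
    (hα : α ∈ Metric.thickening r (shiftedRationals γ Q)) :
    (α : UnitAddCircle) ∈ ⋃ q > 0, approxSet γ ψ q := by
  obtain ⟨_, ⟨q, a, hQq, hq, rfl⟩, hdist⟩ := Metric.mem_thickening_iff.1 hα
  have hq0 : 0 < q := hQ.trans_le hQq
  have hq0' : (0 : ℝ) < q := Nat.cast_pos.2 hq0
  have hQ' : (0 : ℝ) < 2 * Q := by positivity
  have hr0 : 0 < r := dist_nonneg.trans_lt hdist
  refine mem_iUnion₂.2 ⟨q, hq0, coe_mem_approxSet_iff.2 ?_⟩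
  calc distNearestInt (q * α - γ) ≤ |q * α - γ - a| := round_le _ _
    _ = q * |α - (a + γ) / q| := by
        rw [← abs_of_pos hq0', ← abs_mul, abs_of_pos hq0']
        congr 1
        field_simp
        ring
    _ < q * r := by gcongr; exact hdist
    _ ≤ 2 * Q * r := by gcongr; exact_mod_cast hq
    _ ≤ ψ (2 * Q) := (le_div_iff₀' hQ').1 hr
    _ ≤ ψ q := hψ q (2 * Q) hq0 hq

end ApproxSet

section Condensation

variable {ψ : ℕ → ℝ}

lemma not_summable_comp_mul (hψ0 : ∀ q, 0 ≤ ψ q) (hψ : ∀ q r : ℕ, 1 ≤ q → q ≤ r → ψ r ≤ ψ q)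
    (hdiv : ¬ Summable ψ) {d : ℕ} (hd : 0 < d) : ¬ Summable fun q ↦ ψ (d * q) := by
  intro hs
  refine hdiv ((summable_schlomilch_iff_of_nonneg (C := 1) (u := fun n ↦ d * (n + 1)) hψ0
    (fun m n hm hmn ↦ hψ m n hm hmn) (fun n ↦ by positivity)
    (fun a b hab ↦ Nat.mul_lt_mul_of_pos_left (by omega) hd) one_ne_zero fun n ↦ ?_).1 ?_)
  · simp only [mul_add, smul_eq_mul]
    omega
  · refine (((summable_nat_add_iff 1).2 hs).mul_left (d : ℝ)).congr fun n ↦ ?_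
    push_cast
    ring

lemma not_summable_geometric_mul (hψ0 : ∀ q, 0 ≤ ψ q)
    (hψ : ∀ q r : ℕ, 1 ≤ q → q ≤ r → ψ r ≤ ψ q) (hdiv : ¬ Summable ψ) {a b : ℕ} (ha : 0 < a)
    (hb : 1 < b) : ¬ Summable fun n ↦ (a * b ^ n : ℕ) * ψ (a * b ^ n) := by
  intro hs
  have hmono : StrictMono fun n ↦ a * b ^ n := fun m n hmn ↦
    Nat.mul_lt_mul_of_pos_left (Nat.pow_lt_pow_right hb hmn) ha
  refine hdiv ((summable_schlomilch_iff_of_nonneg (C := b) (u := fun n ↦ a * b ^ n) hψ0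
    (fun m n hm hmn ↦ hψ m n hm hmn) (fun n ↦ by positivity) hmono (by omega) fun n ↦ ?_).1 ?_)
  · rw [smul_eq_mul, Nat.mul_sub]
    exact (congrArg₂ (· - ·) (by ring) (by ring)).le
  · refine (hs.mul_left (b - 1 : ℝ)).congr fun n ↦ ?_
    push_cast
    ring

lemma not_summable_sq_mul_min (hψ0 : ∀ q, 0 ≤ ψ q)
    (hψ : ∀ q r : ℕ, 1 ≤ q → q ≤ r → ψ r ≤ ψ q) (hdiv : ¬ Summable ψ) {a b : ℕ} (ha : 0 < a)
    (hb : 1 < b) :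
    ¬ Summable fun n ↦ (((a * b ^ n) ^ 2 : ℕ) : ℝ) *
      min (ψ (2 * (a * b ^ n)) / (2 * (a * b ^ n : ℕ))) (1 / (2 * (a * b ^ n : ℕ) ^ 2)) := by
  intro hs
  refine not_summable_geometric_mul hψ0 hψ hdiv (a := 2 * a) (by positivity) hb ?_
  have hmin : Summable fun n ↦ min ((2 * a * b ^ n : ℕ) * ψ (2 * a * b ^ n) / 4) (1 / 2 : ℝ) := by
    refine hs.congr fun n ↦ ?_
    rw [← mul_assoc 2 a, mul_min_of_nonneg _ _ (Nat.cast_nonneg _)]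
    push_cast
    congr 1 <;> field_simp
    norm_num
  exact ((summable_of_summable_min one_half_pos hmin).mul_left 4).congr fun n ↦ by ring

end Condensation

section Khinchin

variable {ψ : ℕ → ℝ}

lemma sum_two_mul_sq_le (n : ℕ) :
    (∑ k ∈ Finset.range n, 2 * (8 * 32 ^ k) ^ 2 : ℝ) ≤ 2 / 1023 * (8 * 32 ^ n) ^ 2 := by
  induction n with
  | zero => norm_num
  | succ n ih =>
    rw [Finset.sum_range_succ]
    have hstep : (8 * 32 ^ (n + 1) : ℝ) ^ 2 = 1024 * (8 * 32 ^ n) ^ 2 := by ring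
    linarith

theorem ofReal_le_volume_iUnion_approxSet (γ : ℝ) (hψ0 : ∀ q, 0 ≤ ψ q)
    (hψ : ∀ q r : ℕ, 1 ≤ q → q ≤ r → ψ r ≤ ψ q) (hdiv : ¬ Summable ψ) :
    ENNReal.ofReal (1 / 200) ≤ volume (⋃ q > 0, approxSet γ ψ q) := by
  set Q : ℕ → ℕ := fun n ↦ 8 * 32 ^ n
  set r : ℕ → ℝ := fun n ↦ min (ψ (2 * Q n) / (2 * Q n)) (1 / (2 * Q n ^ 2))
  have hQ : ∀ n, 0 < Q n := fun n ↦ by positivity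
  have hr : ∀ n, 0 ≤ r n := fun n ↦ le_min (div_nonneg (hψ0 _) (by positivity)) (by positivity)
  choose J hJ y hcard hy using fun n ↦
    exists_Ioo_subset_cell_inter_thickening γ (hQ n) (dvd_mul_right 8 _)
      (min_le_right _ _ : r n ≤ _)
  have hsub : ⋃ n, intervalUnion (J n) (y n) (r n) ⊆
      Icc 0 1 ∩ ((↑) : ℝ → UnitAddCircle) ⁻¹' ⋃ q > 0, approxSet γ ψ q := by
    refine iUnion_subset fun n ↦ iUnion₂_subset fun j hj α hα ↦ ⟨?_, ?_⟩
    · exact Ico_subset_Icc_self (cell_subset_Ico (hJ n hj) (hy n j hj hα).1)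
    · exact coe_mem_iUnion_approxSet (hQ n) hψ (min_le_left _ _) (hy n j hj hα).2
  have hfin : volume (⋃ n, intervalUnion (J n) (y n) (r n)) ≠ ∞ :=
    measure_ne_top_of_subset (hsub.trans inter_subset_left) measure_Icc_lt_top.ne
  have hsum : ∀ n, (∑ k ∈ Finset.range n, 2 * (J k).card : ℕ) ≤
      2 / 1023 * ((Q n ^ 2 : ℕ) : ℝ) := by
    intro n
    have hJcard : ∀ k, ((J k).card : ℝ) ≤ (8 * 32 ^ k) ^ 2 := fun k ↦ by
      have hle : (J k).card ≤ (8 * 32 ^ k) ^ 2 := by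
        simpa only [Int.card_Ico, sub_zero, Int.toNat_natCast] using Finset.card_le_card (hJ k)
      exact_mod_cast hle
    push_cast [Q]
    exact (Finset.sum_le_sum fun k _ ↦ by linarith [hJcard k]).trans (sum_two_mul_sq_le n)
  -- Level `k < n` contributes at most `2 * Q k ^ 2 = 2 * Q n ^ 2 / 1024 ^ (n - k)` endpoints,
  -- whence the boundary term `2 * ∑ i ≥ 1, 1024 ^ (-i) = 2 / 1023`.
  have hlow := sub_le_volume_real_iUnion_intervalUnion (c := 1 / 100) (fun n ↦ pow_pos (hQ n) 2) hr
    (fun n j hj ↦ (hy n j hj).trans inter_subset_left) (fun n ↦ by linarith [hcard n]) hsum hfin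
    (not_summable_sq_mul_min hψ0 hψ hdiv (by norm_num) (by norm_num))
  calc ENNReal.ofReal (1 / 200)
      ≤ ENNReal.ofReal (volume.real (⋃ n, intervalUnion (J n) (y n) (r n))) :=
        ENNReal.ofReal_le_ofReal (by linarith)
    _ = volume (⋃ n, intervalUnion (J n) (y n) (r n)) := ofReal_measureReal hfin
    _ ≤ volume (Icc 0 1 ∩ ((↑) : ℝ → UnitAddCircle) ⁻¹' ⋃ q > 0, approxSet γ ψ q) :=
        measure_mono hsub
    _ = volume (⋃ q > 0, approxSet γ ψ q) :=
        volume_Icc_inter_preimage_coe (isOpen_iUnion_approxSet γ ψ).measurableSet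

theorem ofReal_le_volume_dvdLimsup_approxSet (γ : ℝ) (hψ0 : ∀ q, 0 ≤ ψ q)
    (hψ : ∀ q r : ℕ, 1 ≤ q → q ≤ r → ψ r ≤ ψ q) (hdiv : ¬ Summable ψ) :
    ENNReal.ofReal (1 / 200) ≤ volume (dvdLimsup (approxSet γ ψ)) := by
  refine le_measure_dvdLimsup (fun q ↦ (isOpen_approxSet _ _ q).measurableSet) fun d hd ↦ ?_
  have hdilate : ⋃ q > 0, approxSet γ ψ (d * q) =
      (d • ·) ⁻¹' ⋃ q > 0, approxSet γ (fun q ↦ ψ (d * q)) q := by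
    simp only [preimage_iUnion, approxSet, preimage_preimage, mul_nsmul]
  rw [hdilate, (measurePreserving_nsmul_unitAddCircle hd).measure_preimage
    (isOpen_iUnion_approxSet _ _).measurableSet.nullMeasurableSet]
  exact ofReal_le_volume_iUnion_approxSet γ (fun q ↦ hψ0 _)
    (fun q r hq hqr ↦ hψ _ _ (Nat.mul_pos hd hq) (Nat.mul_le_mul_left d hqr))
    (not_summable_comp_mul hψ0 hψ hdiv hd)

lemma volume_WSet_eq_one {γ : ℝ} (h : volume (dvdLimsup (approxSet γ ψ)) ≠ 0) :
    volume (WSet ψ fun _ ↦ γ) = 1 := by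
  have hone : volume (dvdLimsup (approxSet γ ψ)) = 1 := by
    obtain hempty | huniv := dvdLimsup_preimage_nsmul_ae_empty_or_univ
      (B := fun q ↦ Metric.ball (γ : UnitAddCircle) (ψ q)) fun _ ↦ measurableSet_ball
    · exact absurd ((measure_congr hempty).trans measure_empty) h
    · exact (measure_congr huniv).trans UnitAddCircle.measure_univ
  have hsub : Icc 0 1 ∩ ((↑) : ℝ → UnitAddCircle) ⁻¹' dvdLimsup (approxSet γ ψ) ⊆
      WSet ψ fun _ ↦ γ := by
    rintro α ⟨hα, hlim⟩
    refine ⟨hα, (infinite_setOf_mem_of_mem_dvdLimsup hlim).mono ?_⟩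
    rintro q ⟨hq, hαq⟩
    exact ⟨hq, coe_mem_approxSet_iff.1 hαq⟩
  refine le_antisymm ?_ ?_
  · calc volume (WSet ψ fun _ ↦ γ) ≤ volume (Icc (0 : ℝ) 1) := measure_mono fun _ hα ↦ hα.1
      _ = 1 := by simp
  · rw [← hone, ← volume_Icc_inter_preimage_coe (measurableSet_dvdLimsup fun q ↦
      (isOpen_approxSet _ _ q).measurableSet)]
    exact measure_mono hsub

end Khinchin

theorem stmt4_general {ι : Type*} [Finite ι] (γ : ℝ) (π : ι → Set ℕ)
    (hcover : ∀ q : ℕ, 1 ≤ q → ∃ k, q ∈ π k) (ψ : ℕ → ℝ) (hψ0 : ∀ q, 0 ≤ ψ q)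
    (hψdec : ∀ q r : ℕ, 1 ≤ q → q ≤ r → ψ r ≤ ψ q) (hdiv : ¬ Summable ψ) :
    ∃ k, volume (WSet ((π k).indicator ψ) fun _ ↦ γ) = 1 := by
  have hcover_approxSet : ∀ q > 0,
      approxSet γ ψ q ⊆ ⋃ k, approxSet γ ((π k).indicator ψ) q := by
    intro q hq x hx
    obtain ⟨k, hk⟩ := hcover q hq
    refine mem_iUnion.2 ⟨k, ?_⟩
    rwa [approxSet, indicator_of_mem hk]
  have hpos : 0 < volume (⋃ k, dvdLimsup (approxSet γ ((π k).indicator ψ))) :=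
    calc 0 < ENNReal.ofReal (1 / 200) := ENNReal.ofReal_pos.2 (by norm_num)
      _ ≤ volume (dvdLimsup (approxSet γ ψ)) :=
        ofReal_le_volume_dvdLimsup_approxSet γ hψ0 hψdec hdiv
      _ ≤ _ := measure_mono ((dvdLimsup_mono hcover_approxSet).trans (dvdLimsup_iUnion_subset _))
  obtain ⟨k, hk⟩ := exists_measure_pos_of_not_measure_iUnion_null hpos.ne'
  exact ⟨k, volume_WSet_eq_one hk.ne'⟩

theorem stmt4 (γ : ℝ) (ℓ : ℕ) (π : Fin ℓ → Set ℕ)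
    (hpart : ∀ q : ℕ, 1 ≤ q → ∃! k, q ∈ π k)
    (ψ : ℕ → ℝ) (hψ0 : ∀ q, 0 ≤ ψ q)
    (hψdec : ∀ q r : ℕ, 1 ≤ q → q ≤ r → ψ r ≤ ψ q)
    (hdiv : ¬ Summable ψ) :
    ∃ k : Fin ℓ, volume (WSet ((π k).indicator ψ) (fun _ => γ)) = 1 :=
  stmt4_general γ π (fun q hq ↦ (hpart q hq).exists) ψ hψ0 hψdec hdiv
end

section
/- Let (X,μ) be a finite measure space and let (A_q)_{q∈ℕ} be a sequence of measurable subsets of X such that 0 < ∑_{q=1}^∞ μ(A_q) < ∞. Then μ(⋃_{q=1}^∞ A_q) ≥ (∑_{q=1}^∞ μ(A_q))² / (∑_{q,r=1}^∞ μ(A_q ∩ A_r)). -/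
open MeasureTheory

/-!
Let `N x` be the number of sets `A i` containing `x`. Then `N` vanishes off `⋃ i, A i`, its integral
is `∑ μ (A i)`, and that of `N ^ 2` is `∑ μ (A i ∩ A j)`. It remains to apply the
Cauchy–Schwarz inequality to `N * 1` on `⋃ i, A i`.
-/

open scoped ENNReal

section SecondMoment

variable {X : Type*} [MeasurableSpace X] {μ : Measure X} {f : X → ℝ≥0∞}

theorem lintegral_le_lintegral_rpow_mul_measure_support {p q : ℝ} (hpq : p.HolderConjugate q)
    (hf : AEMeasurable f μ) :
    ∫⁻ x, f x ∂μ ≤ (∫⁻ x, f x ^ p ∂μ) ^ (1 / p) * μ f.support ^ (1 / q) :=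
  calc ∫⁻ x, f x ∂μ
    _ = ∫⁻ x in f.support, f x * 1 ∂μ := by
      simp only [mul_one, setLIntegral_eq_of_support_subset subset_rfl]
    _ ≤ (∫⁻ x in f.support, f x ^ p ∂μ) ^ (1 / p) * (∫⁻ _ in f.support, 1 ^ q ∂μ) ^ (1 / q) :=
      ENNReal.lintegral_mul_le_Lp_mul_Lq _ hpq hf.restrict aemeasurable_const
    _ ≤ (∫⁻ x, f x ^ p ∂μ) ^ (1 / p) * μ f.support ^ (1 / q) := by
      have := hpq.pos
      simp only [ENNReal.one_rpow, setLIntegral_one]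
      gcongr
      exact Measure.restrict_le_self

theorem sq_lintegral_le_measure_support_mul_lintegral_sq (hf : AEMeasurable f μ) :
    (∫⁻ x, f x ∂μ) ^ 2 ≤ μ f.support * ∫⁻ x, f x ^ 2 ∂μ := by
  have sq_sqrt (a : ℝ≥0∞) : (a ^ (1 / 2 : ℝ)) ^ 2 = a := by
    rw [← ENNReal.rpow_two, ← ENNReal.rpow_mul]
    norm_num
  have holder := lintegral_le_lintegral_rpow_mul_measure_support .two_two hf
  simp only [ENNReal.rpow_two] at holder
  calc (∫⁻ x, f x ∂μ) ^ 2
    _ ≤ ((∫⁻ x, f x ^ 2 ∂μ) ^ (1 / 2 : ℝ) * μ f.support ^ (1 / 2 : ℝ)) ^ 2 := by gcongr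
    _ = μ f.support * ∫⁻ x, f x ^ 2 ∂μ := by rw [mul_pow, sq_sqrt, sq_sqrt, mul_comm]

end SecondMoment

section CoverCount

variable {X ι : Type*} {A : ι → Set X}

/-- The multiplicity function of a family of sets: `coverCount A x` is the number of indices `i`
with `x ∈ A i`. It takes values in `ℝ≥0∞`, as its moments are Lebesgue integrals. -/
noncomputable def coverCount (A : ι → Set X) (x : X) : ℝ≥0∞ :=
  ∑' i, (A i).indicator 1 x

theorem support_coverCount : (coverCount A).support = ⋃ i, A i := by
  ext x
  simp [coverCount, ENNReal.tsum_eq_zero]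

variable [MeasurableSpace X] {μ : Measure X} [Countable ι]

theorem aemeasurable_coverCount (hA : ∀ i, NullMeasurableSet (A i) μ) :
    AEMeasurable (coverCount A) μ :=
  .tsum fun i ↦ aemeasurable_one.indicator₀ (hA i)

theorem lintegral_coverCount_mul (hA : ∀ i, NullMeasurableSet (A i) μ) {g : X → ℝ≥0∞}
    (hg : AEMeasurable g μ) :
    ∫⁻ x, coverCount A x * g x ∂μ = ∑' i, ∫⁻ x in A i, g x ∂μ :=
  calc ∫⁻ x, coverCount A x * g x ∂μ
    _ = ∫⁻ x, ∑' i, (A i).indicator g x ∂μ := by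
      simp only [coverCount, ← ENNReal.tsum_mul_right, ← Set.indicator_mul_left, Pi.one_apply,
        one_mul]
    _ = ∑' i, ∫⁻ x, (A i).indicator g x ∂μ := lintegral_tsum fun i ↦ hg.indicator₀ (hA i)
    _ = ∑' i, ∫⁻ x in A i, g x ∂μ := tsum_congr fun i ↦ lintegral_indicator₀ (hA i) g

theorem lintegral_coverCount (hA : ∀ i, NullMeasurableSet (A i) μ) :
    ∫⁻ x, coverCount A x ∂μ = ∑' i, μ (A i) := by
  simpa only [mul_one, setLIntegral_one] using
    lintegral_coverCount_mul hA (aemeasurable_const (b := 1))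

theorem lintegral_coverCount_sq (hA : ∀ i, NullMeasurableSet (A i) μ) :
    ∫⁻ x, coverCount A x ^ 2 ∂μ = ∑' i, ∑' j, μ (A i ∩ A j) :=
  calc ∫⁻ x, coverCount A x ^ 2 ∂μ
    _ = ∑' i, ∫⁻ x in A i, coverCount A x ∂μ := by
      simp only [sq, lintegral_coverCount_mul hA (aemeasurable_coverCount hA)]
    _ = ∑' i, ∑' j, μ.restrict (A i) (A j) :=
      tsum_congr fun i ↦ lintegral_coverCount fun j ↦
        (hA j).mono_ac Measure.absolutelyContinuous_restrict
    _ = ∑' i, ∑' j, μ (A i ∩ A j) := by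
      simp only [Measure.restrict_apply₀' (hA _), Set.inter_comm]

-- Clearing the denominator avoids the conventions `0 / 0 = 0` and `∞ / ∞ = 0` of `ℝ≥0∞`.
theorem stmt7_general (hA : ∀ i, NullMeasurableSet (A i) μ) :
    (∑' i, μ (A i)) ^ 2 ≤ μ (⋃ i, A i) * ∑' i, ∑' j, μ (A i ∩ A j) := by
  rw [← support_coverCount, ← lintegral_coverCount hA, ← lintegral_coverCount_sq hA]
  exact sq_lintegral_le_measure_support_mul_lintegral_sq (aemeasurable_coverCount hA)

end CoverCount

theorem stmt7 {X : Type*} [MeasurableSpace X] (μ : Measure X) [IsFiniteMeasure μ]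
    (A : ℕ → Set X) (hA : ∀ q, MeasurableSet (A q))
    (hpos : 0 < ∑' q : ℕ, μ (A q)) (hfin : ∑' q : ℕ, μ (A q) < ⊤) :
    (∑' q : ℕ, μ (A q)) ^ 2 / (∑' q : ℕ, ∑' r : ℕ, μ (A q ∩ A r)) ≤ μ (⋃ q : ℕ, A q) :=
  ENNReal.div_le_of_le_mul (stmt7_general fun q ↦ (hA q).nullMeasurableSet)
end

section
/- Let d(n) denote the number of divisors of n and let f:[1,∞)→[1,∞) be any increasing function. Then there exist constants c > 0 and x₀ ≥ 1 (possibly depending on f) such that for all x ≥ x₀, ∑_{n≤x} 1/( f(log d(n)) · d(n) ) ≥ c · x / ( f((log 2)·log log x) · √(log x) ). -/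
open MeasureTheory

/-- `log x = max {1, ln x}`. -/
noncomputable def log1 (x : ℝ) : ℝ := max 1 (Real.log x)

/-!
If `m < p` with `p` prime, then `d(mp) = 2 d(m)`, and `(m, p)` can be recovered from `mp`. Let `m`
run up to `x ^ (1 / 3)`. By Chebyshev's lower bound there are `≫ x / (m log x)` primes in
`(m, x / m]`, so the numbers `mp` alone contribute `≫ (x / log x) ∑ 1 / (m d(m))` to
`∑ 1 / d(n)`.

For squarefree `n` and `n = ab` we have `d(n) = d(a) d(b)`, so the `d(n)` factorisations of `n` give
`1 / n = ∑ 1 / (a d(a)) · 1 / (b d(b))`. Summing over `n` bounds `(∑ 1 / (m d(m)))²` below by the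
sum of `1 / n` over squarefree `n`, which is of order `log x`, whence `∑ 1 / (m d(m)) ≫ √(log x)`.
The `m` with `d(m) > D` contribute at most `D⁻¹ ∑ 1 / m ≪ D⁻¹ log x`, which is negligible for
`D = (log x) ^ α` with `α > 1 / 2`. Hence numbers with `d(n) ≤ (log x) ^ α` suffice, and on these
the weight `f (log d(n))` is at most `f (α log log x)`.
-/

open Finset Filter

lemma sum_sum_divisorsAntidiagonal_le_sum_mul_sum {R : Type*} [CommSemiring R] [PartialOrder R]
    [IsOrderedRing R] {f g : ℕ → R} (hf : ∀ n, 0 ≤ f n) (hg : ∀ n, 0 ≤ g n) (N : ℕ) :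
    ∑ n ∈ Icc 1 N, ∑ r ∈ n.divisorsAntidiagonal, f r.1 * g r.2 ≤
      (∑ a ∈ Icc 1 N, f a) * ∑ b ∈ Icc 1 N, g b := by
  have fiber (n : ℕ) (hn : n ∈ Icc 1 N) :
      n.divisorsAntidiagonal = {r ∈ Icc 1 N ×ˢ Icc 1 N | r.1 * r.2 = n} := by
    obtain ⟨hn1, hnN⟩ := mem_Icc.1 hn
    exact Nat.divisorsAntidiagonal_eq_prod_filter_of_le (by lia) hnN
  rw [sum_mul_sum, ← sum_product', sum_congr rfl fun n hn => by rw [fiber n hn]]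
  exact sum_fiberwise_le_sum_of_sum_fiber_nonneg fun n _ =>
    sum_nonneg fun r _ => mul_nonneg (hf _) (hg _)

lemma harmonic_le_two_mul_sum_squarefree_inv (N : ℕ) :
    (harmonic N : ℝ) ≤ 2 * ∑ a ∈ Icc 1 N with Squarefree a, (a : ℝ)⁻¹ := by
  set S : Finset ℕ := {a ∈ Icc 1 N | Squarefree a}
  have cover : Icc 1 N ⊆ (Ioo 0 (N + 1) ×ˢ S).image fun r => r.1 ^ 2 * r.2 := by
    intro n hn
    obtain ⟨hn1, hnN⟩ := mem_Icc.1 hn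
    obtain ⟨a, b, ha, hb, rfl, hsq⟩ := Nat.sq_mul_squarefree_of_pos hn1
    have hbN : b ≤ N := by nlinarith [Nat.mul_pos hb ha]
    have haN : a ≤ N := by nlinarith [Nat.pow_pos (n := 2) hb]
    exact mem_image.2 ⟨(b, a), by grind, rfl⟩
  calc (harmonic N : ℝ) = ∑ n ∈ Icc 1 N, (n : ℝ)⁻¹ := by
        simp [harmonic_eq_sum_Icc]
    _ ≤ ∑ n ∈ (Ioo 0 (N + 1) ×ˢ S).image (fun r : ℕ × ℕ => r.1 ^ 2 * r.2), (n : ℝ)⁻¹ :=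
        sum_le_sum_of_subset_of_nonneg cover fun _ _ _ => by positivity
    _ ≤ ∑ r ∈ Ioo 0 (N + 1) ×ˢ S, ((r.1 ^ 2 * r.2 : ℕ) : ℝ)⁻¹ :=
        sum_image_le_of_nonneg fun _ _ => by positivity
    _ = (∑ b ∈ Ioo 0 (N + 1), ((b : ℝ) ^ 2)⁻¹) * ∑ a ∈ S, (a : ℝ)⁻¹ := by
        simp [sum_mul_sum, ← sum_product', -mul_inv_rev, mul_inv]
    _ ≤ 2 * ∑ a ∈ S, (a : ℝ)⁻¹ := by
        gcongr
        simpa using sum_Ioo_inv_sq_le (α := ℝ) 0 (N + 1)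

lemma sum_divisorsAntidiagonal_inv_mul_card_divisors {n : ℕ} (hn : Squarefree n) :
    ∑ r ∈ n.divisorsAntidiagonal,
      (r.1 * #r.1.divisors : ℝ)⁻¹ * (r.2 * #r.2.divisors : ℝ)⁻¹ = (n : ℝ)⁻¹ := by
  have factor (r : ℕ × ℕ) (hr : r ∈ n.divisorsAntidiagonal) :
      (r.1 * #r.1.divisors : ℝ)⁻¹ * (r.2 * #r.2.divisors : ℝ)⁻¹ = (n * #n.divisors : ℝ)⁻¹ := by
    obtain ⟨rfl, -⟩ := Nat.mem_divisorsAntidiagonal.1 hr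
    rw [(Nat.coprime_of_squarefree_mul hn).card_divisors_mul, ← mul_inv]
    push_cast
    ring
  have hcard : (#n.divisors : ℝ) ≠ 0 := by simpa using hn.ne_zero
  rw [sum_congr rfl factor, sum_const, ← Nat.map_div_right_divisors, card_map, nsmul_eq_mul]
  field_simp

lemma sum_squarefree_inv_le_sq_sum_inv_mul_card_divisors (N : ℕ) :
    ∑ n ∈ Icc 1 N with Squarefree n, (n : ℝ)⁻¹ ≤
      (∑ m ∈ Icc 1 N, (m * #m.divisors : ℝ)⁻¹) ^ 2 := by
  set g : ℕ → ℝ := fun m => (m * #m.divisors : ℝ)⁻¹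
  have hg (m : ℕ) : 0 ≤ g m := by positivity
  calc ∑ n ∈ Icc 1 N with Squarefree n, (n : ℝ)⁻¹
      = ∑ n ∈ Icc 1 N with Squarefree n, ∑ r ∈ n.divisorsAntidiagonal, g r.1 * g r.2 :=
        sum_congr rfl fun n hn =>
          (sum_divisorsAntidiagonal_inv_mul_card_divisors (mem_filter.1 hn).2).symm
    _ ≤ ∑ n ∈ Icc 1 N, ∑ r ∈ n.divisorsAntidiagonal, g r.1 * g r.2 :=
        sum_le_sum_of_subset_of_nonneg (filter_subset _ _) fun _ _ _ =>
          sum_nonneg fun r _ => mul_nonneg (hg r.1) (hg r.2)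
    _ ≤ (∑ m ∈ Icc 1 N, g m) ^ 2 :=
        (sum_sum_divisorsAntidiagonal_le_sum_mul_sum hg hg N).trans_eq (sq _).symm

lemma sqrt_log_div_two_le_sum_inv_mul_card_divisors (N : ℕ) :
    √(Real.log (N + 1) / 2) ≤ ∑ m ∈ Icc 1 N, (m * #m.divisors : ℝ)⁻¹ := by
  refine Real.sqrt_le_iff.2 ⟨sum_nonneg fun _ _ => by positivity, ?_⟩
  have hlog : Real.log (N + 1) ≤ harmonic N := by exact_mod_cast log_add_one_le_harmonic N
  linarith [harmonic_le_two_mul_sum_squarefree_inv N,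
    sum_squarefree_inv_le_sq_sum_inv_mul_card_divisors N]

lemma sum_inv_mul_card_divisors_le_of_lt_card_divisors (N : ℕ) {D : ℝ} (hD : 0 < D) :
    ∑ m ∈ Icc 1 N with D < #m.divisors, (m * #m.divisors : ℝ)⁻¹ ≤ (1 + Real.log N) / D := by
  calc ∑ m ∈ Icc 1 N with D < #m.divisors, (m * #m.divisors : ℝ)⁻¹
      ≤ ∑ m ∈ Icc 1 N with D < #m.divisors, (m * D : ℝ)⁻¹ := by
        refine sum_le_sum fun m hm => ?_
        obtain ⟨hmI, hmD⟩ := mem_filter.1 hm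
        have hm0 : (0 : ℝ) < m := by exact_mod_cast (mem_Icc.1 hmI).1
        gcongr
    _ ≤ ∑ m ∈ Icc 1 N, (m * D : ℝ)⁻¹ :=
        sum_le_sum_of_subset_of_nonneg (filter_subset _ _) fun _ _ _ => by positivity
    _ = harmonic N / D := by
        simp [harmonic_eq_sum_Icc, mul_sum, div_eq_inv_mul]
    _ ≤ (1 + Real.log N) / D := by
        gcongr
        exact harmonic_le_one_add_log N

lemma sqrt_log_sub_le_sum_inv_mul_card_divisors (N : ℕ) {D : ℝ} (hD : 0 < D) :
    √(Real.log (N + 1) / 2) - (1 + Real.log N) / D ≤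
      ∑ m ∈ Icc 1 N with (#m.divisors : ℝ) ≤ D, (m * #m.divisors : ℝ)⁻¹ := by
  have full := sqrt_log_div_two_le_sum_inv_mul_card_divisors N
  have tail := sum_inv_mul_card_divisors_le_of_lt_card_divisors N hD
  have split := sum_filter_add_sum_filter_not (Icc 1 N) (fun m => (#m.divisors : ℝ) ≤ D)
    fun m => (m * #m.divisors : ℝ)⁻¹
  simp only [not_le] at split
  linarith

lemma eventually_one_add_div_const_mul_rpow_le_mul_sqrt {α C ε : ℝ} (hα : 1 / 2 < α)
    (hC : 0 < C) (hε : 0 < ε) :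
    ∀ᶠ L : ℝ in atTop, (1 + L) / (C * L ^ α) ≤ ε * √L := by
  have growth := (tendsto_rpow_atTop (sub_pos.2 hα)).eventually_ge_atTop (2 / (ε * C))
  filter_upwards [growth, eventually_ge_atTop 1] with L hL hL1
  have hL0 : 0 < L := by linarith
  have hrpow : L ^ α * √L = L ^ (α - 1 / 2) * L := by
    rw [Real.sqrt_eq_rpow, ← Real.rpow_add hL0, ← Real.rpow_add_one hL0.ne']
    ring_nf
  rw [div_le_iff₀ (by positivity)]
  calc 1 + L ≤ ε * C * (2 / (ε * C)) * L := by
        field_simp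
        linarith
    _ ≤ ε * C * L ^ (α - 1 / 2) * L := by gcongr
    _ = ε * √L * (C * L ^ α) := by linear_combination -ε * C * hrpow

lemma eventually_sqrt_log_le_sum_inv_mul_card_divisors {α C : ℝ} (hα : 1 / 2 < α)
    (hC : 0 < C) :
    ∀ᶠ y : ℝ in atTop, √(Real.log y) / 2 ≤
      ∑ m ∈ Icc 1 ⌊y⌋₊ with (#m.divisors : ℝ) ≤ C * Real.log y ^ α,
        (m * #m.divisors : ℝ)⁻¹ := by
  have htail := Real.tendsto_log_atTop.eventually <|
    eventually_one_add_div_const_mul_rpow_le_mul_sqrt hα hC (ε := 1 / 10) (by norm_num)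
  filter_upwards [htail, eventually_gt_atTop 1] with y htail hy
  have hlog : 0 < Real.log y := Real.log_pos hy
  have hfloor : (0 : ℝ) < ⌊y⌋₊ := by exact_mod_cast Nat.floor_pos.2 hy.le
  have main : 6 / 10 * √(Real.log y) ≤ √(Real.log (⌊y⌋₊ + 1) / 2) := by
    have hle : Real.log y ≤ Real.log (⌊y⌋₊ + 1) :=
      Real.log_le_log (by linarith) (Nat.lt_floor_add_one y).le
    refine Real.le_sqrt_of_sq_le ?_
    rw [mul_pow, Real.sq_sqrt hlog.le]
    linarith
  have tail : (1 + Real.log ⌊y⌋₊) / (C * Real.log y ^ α) ≤ 1 / 10 * √(Real.log y) := by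
    refine le_trans ?_ htail
    gcongr
    exact Nat.floor_le (by linarith)
  linarith [sqrt_log_sub_le_sum_inv_mul_card_divisors ⌊y⌋₊
    (show 0 < C * Real.log y ^ α by positivity)]

lemma eventually_sqrt_log_le_sum_inv_mul_card_divisors_cbrt {α : ℝ} (hα : 1 / 2 < α) :
    ∀ᶠ x : ℝ in atTop, √(Real.log x) / 4 ≤
      ∑ m ∈ Icc 1 ⌊x ^ (1 / 3 : ℝ)⌋₊ with (#m.divisors : ℝ) ≤ Real.log x ^ α / 2,
        (m * #m.divisors : ℝ)⁻¹ := by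
  have hsum := (tendsto_rpow_atTop (y := 1 / 3) (by norm_num)).eventually <|
    eventually_sqrt_log_le_sum_inv_mul_card_divisors hα (C := 1 / 2) (by norm_num)
  filter_upwards [hsum, eventually_gt_atTop 1] with x hsum hx
  have hlog : 0 < Real.log x := Real.log_pos hx
  rw [Real.log_rpow (by linarith), one_div_mul_eq_div, one_div_mul_eq_div] at hsum
  calc √(Real.log x) / 4 ≤ √(Real.log x / 3) / 2 := by
        have hsqrt : √(Real.log x) / 2 ≤ √(Real.log x / 3) := by
          refine Real.le_sqrt_of_sq_le ?_
          rw [div_pow, Real.sq_sqrt hlog.le]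
          linarith
        linarith
    _ ≤ _ := hsum
    _ ≤ _ := by
        refine sum_le_sum_of_subset_of_nonneg ?_ fun _ _ _ => by positivity
        refine monotone_filter_right _ fun m _ hm => hm.trans ?_
        gcongr
        linarith

lemma eventually_log_le_mul_rpow {ε r : ℝ} (hε : 0 < ε) (hr : 0 < r) :
    ∀ᶠ t : ℝ in atTop, Real.log t ≤ ε * t ^ r := by
  filter_upwards [(isLittleO_log_rpow_atTop hr).bound hε, eventually_ge_atTop 0] with t ht ht0
  rw [Real.norm_of_nonneg (Real.rpow_nonneg ht0 r)] at ht
  exact (Real.le_norm_self _).trans ht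

lemma eventually_mul_div_log_le_primeCounting {c : ℝ} (hc : c < Real.log 2) :
    ∀ᶠ t : ℝ in atTop, c * t / Real.log t ≤ Nat.primeCounting ⌊t⌋₊ := by
  have hε : 0 < (Real.log 2 - c) / 3 := by linarith
  filter_upwards [eventually_log_le_mul_rpow hε one_pos, eventually_ge_atTop 2]
    with t hlog ht
  have hlog0 : 0 < Real.log t := Real.log_pos (by linarith)
  have hlog_add : Real.log (t + 2) ≤ 2 * Real.log t := by
    rw [← Nat.cast_two (R := ℝ), ← Real.log_pow]
    refine Real.log_le_log ?_ ?_ <;> push_cast <;> nlinarith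
  have hlog_two : Real.log 2 ≤ Real.log t := Real.log_le_log two_pos ht
  rw [Real.rpow_one] at hlog
  refine le_trans ?_ (Chebyshev.pi_ge' (by linarith))
  gcongr
  linarith

lemma primeCounting_le_card_primes_Ioc_add (k n : ℕ) :
    Nat.primeCounting n ≤ #{p ∈ Ioc k n | p.Prime} + k := by
  have cover : n.primesLE ⊆ {p ∈ Ioc k n | p.Prime} ∪ Icc 1 k := by
    intro p hp
    obtain ⟨hpn, hp⟩ := Nat.mem_primesLE.1 hp
    have := hp.pos
    simp only [mem_union, mem_filter, mem_Ioc, mem_Icc]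
    grind
  simpa using (card_le_card cover).trans (card_union_le _ _)

lemma eventually_div_four_mul_log_le_card_primes_Ioc :
    ∀ᶠ t : ℝ in atTop, ∀ k : ℕ, (k : ℝ) ^ 2 ≤ t →
      t / (4 * Real.log t) ≤ #{p ∈ Ioc k ⌊t⌋₊ | p.Prime} := by
  have hhalf : 1 / 2 < Real.log 2 := by linarith [Real.log_two_gt_d9]
  filter_upwards [eventually_mul_div_log_le_primeCounting hhalf,
    eventually_log_le_mul_rpow (ε := 1 / 4) (r := 1 / 2) (by norm_num) (by norm_num),
    eventually_gt_atTop 1] with t hpi hlog ht k hk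
  have hlog0 : 0 < Real.log t := Real.log_pos ht
  have hk_le : (k : ℝ) ≤ t / (4 * Real.log t) := by
    rw [← Real.sqrt_eq_rpow] at hlog
    calc (k : ℝ) ≤ √t := Real.le_sqrt_of_sq_le hk
      _ ≤ t / (4 * Real.log t) := by
        rw [le_div_iff₀ (by positivity)]
        nlinarith [Real.mul_self_sqrt (by linarith : 0 ≤ t), Real.sqrt_nonneg t]
  have hcount : (Nat.primeCounting ⌊t⌋₊ : ℝ) ≤ #{p ∈ Ioc k ⌊t⌋₊ | p.Prime} + k := by
    exact_mod_cast primeCounting_le_card_primes_Ioc_add k ⌊t⌋₊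
  have hsplit : 1 / 2 * t / Real.log t = t / (4 * Real.log t) + t / (4 * Real.log t) := by
    field_simp
    norm_num
  linarith

lemma eventually_div_le_card_primes_Ioc_of_cube_le :
    ∀ᶠ x : ℝ in atTop, ∀ m : ℕ, 0 < m → (m : ℝ) ^ 3 ≤ x →
      x / m / (4 * Real.log x) ≤ #{p ∈ Ioc m ⌊x / m⌋₊ | p.Prime} := by
  obtain ⟨t₀, ht₀⟩ := eventually_atTop.1
    (eventually_div_four_mul_log_le_card_primes_Ioc.and (eventually_gt_atTop 1))
  filter_upwards [eventually_ge_atTop (t₀ ^ 3), eventually_ge_atTop 1] with x hx hx1 m hm hmx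
  have hm0 : (0 : ℝ) < m := by exact_mod_cast hm
  have hm1 : (1 : ℝ) ≤ m := by exact_mod_cast hm
  have hsq : (m : ℝ) ^ 2 ≤ x / m := by
    rw [le_div_iff₀ hm0]
    linarith
  have ht : t₀ ≤ x / m := by
    refine le_of_pow_le_pow_left₀ three_ne_zero (by positivity) (hx.trans ?_)
    rw [div_pow, le_div_iff₀ (by positivity)]
    nlinarith [mul_le_mul_of_nonneg_left hmx (by positivity : 0 ≤ x), sq_nonneg x]
  obtain ⟨hcount, hgt⟩ := ht₀ _ ht
  refine le_trans ?_ (hcount m hsq)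
  have hlog : 0 < Real.log (x / m) := Real.log_pos hgt
  gcongr
  exact div_le_self (by linarith) hm1

lemma injOn_mul_prime :
    Set.InjOn (fun r : (_ : ℕ) × ℕ => r.1 * r.2) {r | 0 < r.1 ∧ r.1 < r.2 ∧ r.2.Prime} := by
  have dvd_of_mul_eq {m p m' p' : ℕ} (hp : p.Prime) (hp' : p'.Prime) (hne : p ≠ p')
      (h : m * p = m' * p') : p ∣ m' :=
    (hp.dvd_mul.1 (h ▸ dvd_mul_left p m)).resolve_right
      (mt (Nat.prime_dvd_prime_iff_eq hp hp').1 hne)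
  rintro ⟨m, p⟩ ⟨hm, hmp, hp⟩ ⟨m', p'⟩ ⟨hm', hmp', hp'⟩ (h : m * p = m' * p')
  obtain rfl : p = p' := by
    by_contra hne
    have := Nat.le_of_dvd hm' (dvd_of_mul_eq hp hp' hne h)
    have := Nat.le_of_dvd hm (dvd_of_mul_eq hp' hp (Ne.symm hne) h.symm)
    lia
  obtain rfl : m = m' := Nat.eq_of_mul_eq_mul_right hp.pos h
  rfl

lemma sum_sum_mul_prime_le {R : Type*} [AddCommMonoid R] [PartialOrder R] [IsOrderedAddMonoid R]
    {w : ℕ → R} (hw : ∀ n, 0 ≤ w n) {M S : Finset ℕ} {P : ℕ → Finset ℕ}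
    (hM : ∀ m ∈ M, 0 < m) (hP : ∀ m ∈ M, ∀ p ∈ P m, m < p ∧ p.Prime)
    (hS : ∀ m ∈ M, ∀ p ∈ P m, m * p ∈ S) :
    ∑ m ∈ M, ∑ p ∈ P m, w (m * p) ≤ ∑ n ∈ S, w n := by
  have hinj : Set.InjOn (fun r : (_ : ℕ) × ℕ => r.1 * r.2) (M.sigma P) :=
    injOn_mul_prime.mono fun r hr => by
      obtain ⟨hm, hp⟩ := mem_sigma.1 (mem_coe.1 hr)
      exact ⟨hM _ hm, hP _ hm _ hp⟩
  rw [sum_sigma', ← sum_image (f := w) (g := fun r : (_ : ℕ) × ℕ => r.1 * r.2) hinj]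
  refine sum_le_sum_of_subset_of_nonneg (image_subset_iff.2 fun r hr => ?_) fun _ _ _ => hw _
  obtain ⟨hm, hp⟩ := mem_sigma.1 hr
  exact hS _ hm _ hp

lemma card_divisors_mul_prime_of_lt {m p : ℕ} (hm : 0 < m) (hmp : m < p) (hp : p.Prime) :
    #(m * p).divisors = 2 * #m.divisors := by
  have hcop : m.Coprime p := (Nat.coprime_of_lt_prime hm.ne' hmp hp).symm
  rw [hcop.card_divisors_mul, hp.divisors, card_pair hp.one_lt.ne, mul_comm]

lemma mul_sum_inv_mul_card_divisors_le_sum_inv_card_divisors {x D K : ℝ} {N : ℕ}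
    (hprimes : ∀ m ∈ Icc 1 N, K / m ≤ #{p ∈ Ioc m ⌊x / m⌋₊ | p.Prime}) :
    K / 2 * ∑ m ∈ Icc 1 N with (#m.divisors : ℝ) ≤ D / 2, (m * #m.divisors : ℝ)⁻¹ ≤
      ∑ n ∈ Icc 1 ⌊x⌋₊ with (#n.divisors : ℝ) ≤ D, (#n.divisors : ℝ)⁻¹ := by
  set M : Finset ℕ := {m ∈ Icc 1 N | (#m.divisors : ℝ) ≤ D / 2}
  set P : ℕ → Finset ℕ := fun m => {p ∈ Ioc m ⌊x / m⌋₊ | p.Prime}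
  have hM (m : ℕ) (hm : m ∈ M) : 0 < m := (mem_Icc.1 (mem_filter.1 hm).1).1
  have hP (m : ℕ) (_ : m ∈ M) (p : ℕ) (hp : p ∈ P m) : m < p ∧ p.Prime := by
    simp only [P, mem_filter, mem_Ioc] at hp
    exact ⟨hp.1.1, hp.2⟩
  have hcard (m : ℕ) (hm : m ∈ M) (p : ℕ) (hp : p ∈ P m) :
      (#(m * p).divisors : ℝ) = 2 * #m.divisors := by
    obtain ⟨hmp, hprime⟩ := hP m hm p hp
    exact_mod_cast card_divisors_mul_prime_of_lt (hM m hm) hmp hprime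
  have hS (m : ℕ) (hm : m ∈ M) (p : ℕ) (hp : p ∈ P m) :
      m * p ∈ ({n ∈ Icc 1 ⌊x⌋₊ | (#n.divisors : ℝ) ≤ D} : Finset ℕ) := by
    have hmpx : m * p ≤ ⌊x⌋₊ := by
      rw [mul_comm, ← Nat.le_div_iff_mul_le (hM m hm), ← Nat.floor_div_natCast]
      exact (mem_Ioc.1 (mem_filter.1 hp).1).2
    refine mem_filter.2 ⟨mem_Icc.2 ⟨Nat.mul_pos (hM m hm) (hP m hm p hp).2.pos, hmpx⟩, ?_⟩
    linarith [hcard m hm p hp, (mem_filter.1 hm).2]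
  refine le_trans ?_ (sum_sum_mul_prime_le (fun n => by positivity) hM hP hS)
  rw [mul_sum]
  refine sum_le_sum fun m hm => ?_
  calc K / 2 * (m * #m.divisors : ℝ)⁻¹ = K / m * (2 * #m.divisors : ℝ)⁻¹ := by
        simp only [div_eq_mul_inv, mul_inv]
        ring
    _ ≤ #(P m) * (2 * #m.divisors : ℝ)⁻¹ := by
        gcongr
        exact hprimes m (mem_filter.1 hm).1
    _ = ∑ p ∈ P m, (#(m * p).divisors : ℝ)⁻¹ := by
        rw [sum_congr rfl fun p hp => by rw [hcard m hm p hp], sum_const, nsmul_eq_mul]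

lemma eventually_div_sqrt_log_le_sum_inv_card_divisors {α : ℝ} (hα : 1 / 2 < α) :
    ∀ᶠ x : ℝ in atTop, 1 / 32 * x / √(Real.log x) ≤
      ∑ n ∈ Icc 1 ⌊x⌋₊ with (#n.divisors : ℝ) ≤ Real.log x ^ α, (#n.divisors : ℝ)⁻¹ := by
  filter_upwards [eventually_sqrt_log_le_sum_inv_mul_card_divisors_cbrt hα,
    eventually_div_le_card_primes_Ioc_of_cube_le, eventually_gt_atTop 1] with x hsum hprimes hx
  have hlog : 0 < Real.log x := Real.log_pos hx
  have hcube (m : ℕ) (hm : m ≤ ⌊x ^ (1 / 3 : ℝ)⌋₊) : (m : ℝ) ^ 3 ≤ x := by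
    calc (m : ℝ) ^ 3 ≤ (x ^ (1 / 3 : ℝ)) ^ 3 := by
          gcongr
          exact (Nat.le_floor_iff (by positivity)).1 hm
      _ = x := by
          rw [← Real.rpow_mul_natCast (by linarith)]
          norm_num
  calc 1 / 32 * x / √(Real.log x) = x / (4 * Real.log x) / 2 * (√(Real.log x) / 4) := by
        field_simp
        rw [Real.sq_sqrt hlog.le]
        ring
    _ ≤ x / (4 * Real.log x) / 2 * ∑ m ∈ Icc 1 ⌊x ^ (1 / 3 : ℝ)⌋₊
          with (#m.divisors : ℝ) ≤ Real.log x ^ α / 2, (m * #m.divisors : ℝ)⁻¹ := by gcongr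
    _ ≤ ∑ n ∈ Icc 1 ⌊x⌋₊ with (#n.divisors : ℝ) ≤ Real.log x ^ α, (#n.divisors : ℝ)⁻¹ := by
        refine mul_sum_inv_mul_card_divisors_le_sum_inv_card_divisors fun m hm => ?_
        rw [div_right_comm]
        obtain ⟨hm1, hm3⟩ := mem_Icc.1 hm
        exact hprimes m hm1 (hcube m hm3)

lemma log1_le_max_mul_log1_log1 {α x d : ℝ} (hα : 0 ≤ α) (hx : 1 < x) (hd : 0 < d)
    (hdx : d ≤ Real.log x ^ α) :
    log1 d ≤ max 1 (α * log1 (log1 x)) := by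
  have hlog : 0 < Real.log x := Real.log_pos hx
  refine max_le_max le_rfl ?_
  calc Real.log d ≤ Real.log (Real.log x ^ α) := Real.log_le_log hd hdx
    _ = α * Real.log (Real.log x) := Real.log_rpow hlog α
    _ ≤ α * Real.log (log1 x) := by
        gcongr
        exact le_max_right _ _
    _ ≤ α * log1 (log1 x) := by
        gcongr
        exact le_max_right _ _

lemma sum_inv_div_le_sum_one_div_mul_of_log1_le {ι : Type*} {f : ℝ → ℝ} {d : ι → ℝ}
    {s t : Finset ι} {T : ℝ} (hmono : MonotoneOn f (Set.Ici 1)) (hf : 0 < f 1)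
    (hd : ∀ i, 0 ≤ d i) (hts : t ⊆ s) (hT : 1 ≤ T) (ht : ∀ i ∈ t, log1 (d i) ≤ T) :
    (∑ i ∈ t, (d i)⁻¹) / f T ≤ ∑ i ∈ s, 1 / (f (log1 (d i)) * d i) := by
  have hlog1 (i : ι) : log1 (d i) ∈ Set.Ici 1 := Set.mem_Ici.2 (le_max_left _ _)
  have hpos (i : ι) : 0 < f (log1 (d i)) :=
    hf.trans_le (hmono Set.self_mem_Ici (hlog1 i) (hlog1 i))
  calc (∑ i ∈ t, (d i)⁻¹) / f T = ∑ i ∈ t, (d i)⁻¹ / f T := sum_div _ _ _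
    _ ≤ ∑ i ∈ t, (d i)⁻¹ / f (log1 (d i)) := by
        refine sum_le_sum fun i hi => ?_
        exact div_le_div_of_nonneg_left (inv_nonneg.2 (hd i)) (hpos i)
          (hmono (hlog1 i) (Set.mem_Ici.2 hT) (ht i hi))
    _ ≤ ∑ i ∈ s, (d i)⁻¹ / f (log1 (d i)) :=
        sum_le_sum_of_subset_of_nonneg hts fun i _ _ =>
          div_nonneg (inv_nonneg.2 (hd i)) (hpos i).le
    _ = ∑ i ∈ s, 1 / (f (log1 (d i)) * d i) := by
        simp only [inv_eq_one_div, div_div, mul_comm]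

theorem stmt8_general {α : ℝ} (hα : 1 / 2 < α) :
    ∃ c > (0 : ℝ), ∃ x₀ ≥ (1 : ℝ), ∀ f : ℝ → ℝ, MonotoneOn f (Set.Ici 1) → 0 < f 1 →
      ∀ x ≥ x₀, c * x / (f (max 1 (α * log1 (log1 x))) * √(log1 x)) ≤
        ∑ n ∈ Icc 1 ⌊x⌋₊, 1 / (f (log1 #n.divisors) * (#n.divisors : ℝ)) := by
  obtain ⟨x₀, hx₀⟩ := eventually_atTop.1
    ((eventually_div_sqrt_log_le_sum_inv_card_divisors hα).and (eventually_gt_atTop 1))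
  refine ⟨1 / 32, by norm_num, x₀, (hx₀ x₀ le_rfl).2.le, fun f hmono hf x hx => ?_⟩
  obtain ⟨hsum, hx1⟩ := hx₀ x hx
  have hlog : 0 < Real.log x := Real.log_pos hx1
  set T := max 1 (α * log1 (log1 x))
  have hT : 1 ≤ T := le_max_left _ _
  have hfT : 0 < f T := hf.trans_le (hmono Set.self_mem_Ici (Set.mem_Ici.2 hT) hT)
  calc 1 / 32 * x / (f T * √(log1 x)) ≤ 1 / 32 * x / (f T * √(Real.log x)) := by
        gcongr
        exact le_max_right _ _
    _ = 1 / 32 * x / √(Real.log x) / f T := by rw [mul_comm (f T), div_div]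
    _ ≤ (∑ n ∈ Icc 1 ⌊x⌋₊ with (#n.divisors : ℝ) ≤ Real.log x ^ α, (#n.divisors : ℝ)⁻¹) / f T := by
        gcongr
    _ ≤ ∑ n ∈ Icc 1 ⌊x⌋₊, 1 / (f (log1 #n.divisors) * (#n.divisors : ℝ)) := by
        refine sum_inv_div_le_sum_one_div_mul_of_log1_le hmono hf (fun n => by positivity)
          (filter_subset _ _) hT fun n hn => ?_
        obtain ⟨hnI, hd⟩ := mem_filter.1 hn
        have hn0 : 0 < #n.divisors :=
          card_pos.2 (Nat.nonempty_divisors.2 (Nat.one_le_iff_ne_zero.1 (mem_Icc.1 hnI).1))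
        exact log1_le_max_mul_log1_log1 (by linarith) hx1 (by exact_mod_cast hn0) hd

theorem stmt8 (f : ℝ → ℝ) (hmono : MonotoneOn f (Set.Ici 1))
    (hf : ∀ x ≥ (1:ℝ), 1 ≤ f x) :
    ∃ c > (0:ℝ), ∃ x₀ ≥ (1:ℝ), ∀ x ≥ x₀,
      c * x / (f (max 1 (Real.log 2 * log1 (log1 x))) * Real.sqrt (log1 x)) ≤
        ∑ n ∈ Finset.Icc 1 ⌊x⌋₊,
          1 / (f (log1 (n.divisors.card)) * (n.divisors.card : ℝ)) := by
  obtain ⟨c, hc, x₀, hx₀, h⟩ :=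
    stmt8_general (α := Real.log 2) (by linarith [Real.log_two_gt_d9])
  exact ⟨c, hc, x₀, hx₀, h f hmono (one_pos.trans_le (hf 1 le_rfl))⟩
end

section
/- Suppose ψ:ℕ→ℝ≥0 is decreasing and ∑_{q=1}^∞ ψ(q) = ∞. Then ∑_{q=1}^∞ min{ψ(q), 1/q} = ∞. -/
/-!
Suppose `ψ` is decreasing, `φ(q) ≥ c / q` with `c > 0`, and `∑ min {ψ(q), φ(q)}` converges. Then
`ψ ≥ 0`, since otherwise the terms would stay below a negative number, so by comparison
`∑ min {ψ(q), c / q}` converges too. Its terms decrease, so `q * min {ψ(q), c / q} → 0` by Olivier's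
theorem: for decreasing summable `f`, the product `n * f(n)` is at most twice the block sum of
`f` over `[n / 2, n)`. Hence `c / q`, for which the product would be `c`, eventually stops being the
minimum, and the series agrees with `∑ ψ(q)` from some point on.
-/

open Filter Finset Topology

theorem le_of_antitoneOn_of_le_of_tendsto {ι α : Type*} [SemilatticeSup ι] [Preorder α]
    [TopologicalSpace α] [ClosedIicTopology α] {f g : ι → α} {N n : ι} {a : α}
    (hf : AntitoneOn f (Set.Ici N)) (hgf : g ≤ᶠ[atTop] f) (hg : Tendsto g atTop (𝓝 a))
    (hn : N ≤ n) : a ≤ f n := by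
  have : Nonempty ι := ⟨n⟩
  refine le_of_tendsto hg ?_
  filter_upwards [hgf, eventually_ge_atTop n] with m hm hnm
  exact hm.trans (hf hn (hn.trans hnm) hnm)

theorem sub_mul_le_sum_Ico_of_antitoneOn {R : Type*} [Ring R] [PartialOrder R] [IsOrderedRing R]
    {f : ℕ → R} {N m n : ℕ} (hf : AntitoneOn f (Set.Ici N)) (hm : N ≤ m) (hmn : m ≤ n) :
    ((n : R) - m) * f n ≤ ∑ k ∈ Ico m n, f k := by
  have h_card : #(Ico m n) • f n ≤ ∑ k ∈ Ico m n, f k :=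
    card_nsmul_le_sum _ _ _ fun k hk ↦
      have ⟨hmk, hkn⟩ := mem_Ico.mp hk
      hf (hm.trans hmk) (hm.trans hmn) hkn.le
  simpa only [Nat.card_Ico, nsmul_eq_mul, Nat.cast_sub hmn] using h_card

theorem tendsto_sum_Ico_half_zero_of_summable {G : Type*} [AddCommGroup G] [TopologicalSpace G]
    [IsTopologicalAddGroup G] {f : ℕ → G} (hf : Summable f) :
    Tendsto (fun n ↦ ∑ k ∈ Ico (n / 2) n, f k) atTop (𝓝 0) := by
  have h_partial := hf.hasSum.tendsto_sum_nat
  have h_half : Tendsto (fun n : ℕ ↦ n / 2) atTop atTop := Nat.tendsto_div_const_atTop two_ne_zero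
  simpa only [sum_Ico_eq_sub f (Nat.div_le_self _ 2), sub_self, Function.comp_apply] using
    h_partial.sub (h_partial.comp h_half)

theorem tendsto_mul_zero_of_antitoneOn_of_summable {f : ℕ → ℝ} {N : ℕ}
    (hf : AntitoneOn f (Set.Ici N)) (hsum : Summable f) :
    Tendsto (fun n : ℕ ↦ n * f n) atTop (𝓝 0) := by
  have h_nonneg {n : ℕ} (hn : N ≤ n) : 0 ≤ f n :=
    le_of_antitoneOn_of_le_of_tendsto hf .rfl hsum.tendsto_atTop_zero hn
  have h_block : Tendsto (fun n ↦ 2 * ∑ k ∈ Ico (n / 2) n, f k) atTop (𝓝 0) := by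
    simpa only [mul_zero] using (tendsto_sum_Ico_half_zero_of_summable hsum).const_mul 2
  refine tendsto_of_tendsto_of_tendsto_of_le_of_le' tendsto_const_nhds h_block ?_ ?_
  · filter_upwards [eventually_ge_atTop N] with n hn
    exact mul_nonneg n.cast_nonneg (h_nonneg hn)
  · filter_upwards [eventually_ge_atTop (2 * N)] with n hn
    have h_half : ((n / 2 : ℕ) : ℝ) ≤ n / 2 := Nat.cast_div_le
    calc n * f n ≤ 2 * ((n - (n / 2 : ℕ)) * f n) := by
          nlinarith [h_nonneg (show N ≤ n by lia)]
      _ ≤ 2 * ∑ k ∈ Ico (n / 2) n, f k := by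
          gcongr
          exact sub_mul_le_sum_Ico_of_antitoneOn hf (by lia) (Nat.div_le_self n 2)

theorem antitoneOn_const_div_natCast {K : Type*} [Field K] [LinearOrder K] [IsStrictOrderedRing K]
    {c : K} (hc : 0 ≤ c) : AntitoneOn (fun q : ℕ ↦ c / (q : K)) (Set.Ici 1) := fun _ hq _ _ hqr ↦
  div_le_div_of_nonneg_left hc (Nat.cast_pos.mpr hq) (Nat.cast_le.mpr hqr)

section MinDiv

variable {ψ φ : ℕ → ℝ} {N : ℕ} {c : ℝ}

theorem summable_of_summable_min_const_div (hc : 0 < c) (hψ : AntitoneOn ψ (Set.Ici N))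
    (h : Summable fun q : ℕ ↦ min (ψ q) (c / q)) : Summable ψ := by
  have h_anti : AntitoneOn (fun q : ℕ ↦ min (ψ q) (c / q)) (Set.Ici (max N 1)) :=
    (hψ.mono (Set.Ici_subset_Ici.mpr (le_max_left N 1))).min
      ((antitoneOn_const_div_natCast hc.le).mono (Set.Ici_subset_Ici.mpr (le_max_right N 1)))
  have h_lt : ∀ᶠ q : ℕ in atTop, q * min (ψ q) (c / q) < c :=
    (tendsto_mul_zero_of_antitoneOn_of_summable h_anti h).eventually_lt_const hc
  refine h.congr_atTop ?_
  filter_upwards [h_lt, eventually_ge_atTop 1] with q hq hq1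
  have hq0 : (0 : ℝ) < q := by exact_mod_cast hq1
  have h_min : min (ψ q) (c / q) < c / q := (lt_div_iff₀' hq0).mpr hq
  exact min_eq_left (le_of_not_ge (inf_lt_right.mp h_min))

theorem summable_min_const_div_of_summable_min (hc : 0 ≤ c) (hψ : AntitoneOn ψ (Set.Ici N))
    (hφ : ∀ᶠ q : ℕ in atTop, c / q ≤ φ q) (h : Summable fun q ↦ min (ψ q) (φ q)) :
    Summable fun q : ℕ ↦ min (ψ q) (c / q) := by
  refine h.of_norm_bounded_eventually_nat ?_
  filter_upwards [hφ, eventually_ge_atTop N] with q hq hqN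
  have hψq : 0 ≤ ψ q := le_of_antitoneOn_of_le_of_tendsto hψ
    (.of_forall fun _ ↦ min_le_left _ _) h.tendsto_atTop_zero hqN
  rw [Real.norm_of_nonneg (le_min hψq (div_nonneg hc q.cast_nonneg))]
  exact min_le_min_left (ψ q) hq

theorem stmt10_general (hc : 0 < c) (hψ : AntitoneOn ψ (Set.Ici N))
    (hφ : ∀ᶠ q : ℕ in atTop, c / q ≤ φ q) (hdiv : ¬ Summable ψ) :
    ¬ Summable fun q ↦ min (ψ q) (φ q) := fun h ↦
  hdiv <| summable_of_summable_min_const_div hc hψ <|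
    summable_min_const_div_of_summable_min hc.le hψ hφ h

end MinDiv

theorem stmt10 (ψ : ℕ → ℝ) (hψ0 : ∀ q, 0 ≤ ψ q)
    (hψdec : ∀ q r : ℕ, 1 ≤ q → q ≤ r → ψ r ≤ ψ q)
    (hdiv : ¬ Summable ψ) :
    ¬ Summable (fun q : ℕ => min (ψ q) (1 / (q : ℝ))) :=
  stmt10_general one_pos (fun q hq r _ hqr ↦ hψdec q r hq hqr)
    (.of_forall fun _ ↦ le_rfl) hdiv
end
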